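/- arXiv:1407.6086 — 2 statements merged into one kernel-verified Lean document; each statement's English description precedes it below -/
import Mathlib

section
/- Let 𝒫 be a digital net in G^s with generating matrices C_1,…,C_s, let 𝒫_{Φ_b} be its folded digital net (which is the digital net with generating matrices T C_1,…,T C_s), let 𝒫^⊥ be the dual net of 𝒫 and 𝒫^⊥_{Φ_b} the dual net of 𝒫_{Φ_b}. Then 𝒫^⊥_{Φ_b} = { ⌊k/b⌋ : k ∈ E₀^s ∩ 𝒫^⊥ }, where ⌊k/b⌋ = (⌊k_1/b⌋, …, ⌊k_s/b⌋) componentwise. -/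
namespace QMC

/-- the `i`-th `b`-adic digit of `k`. -/
def digit (b k i : ℕ) : ℕ := k / b ^ i % b

/-- the matrix `T` with `t_{i,1} = b-1`, `t_{i,i+1} = 1` and `t_{i,j} = 0` otherwise
(rows and columns indexed by `ℕ` starting from `0`). -/
def Tmat (b : ℕ) (i j : ℕ) : ZMod b :=
  if j = 0 then ((b - 1 : ℕ) : ZMod b) else if j = i + 1 then 1 else 0

/-- the matrix product `T · C` for a matrix `C` with countably many rows and `m`
columns (the sum over `j` has finite support). -/
noncomputable def TmulC (b : ℕ) {m : ℕ} (C : ℕ → Fin m → ZMod b) : ℕ → Fin m → ZMod b :=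
  fun i c => ∑ᶠ j : ℕ, Tmat b i j * C j c

/-- the dual net `𝒫^⊥ = {k : C₁ᵀ k⃗₁ + ⋯ + C_sᵀ k⃗_s = 0}` of the digital net with
generating matrices `C`. -/
def dualNet (b : ℕ) {s m : ℕ} (C : Fin s → ℕ → Fin m → ZMod b) : Set (Fin s → ℕ) :=
  {k | ∀ c : Fin m, ∑ j, ∑ i ∈ Finset.range (k j + 1),
    C j i c * (digit b (k j) i : ZMod b) = 0}

theorem digit_succ (b k i : ℕ) : digit b k (i + 1) = digit b (k / b) i := by
  unfold digit
  rw [pow_succ', Nat.div_div_eq_div_mul]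

theorem digit_eq_zero (b k i : ℕ) (hb : 2 ≤ b) (h : k ≤ i) : digit b k i = 0 := by
  unfold digit
  have h1 : i < b ^ i := Nat.lt_pow_self (by omega)
  rw [Nat.div_eq_of_lt (by omega), Nat.zero_mod]

theorem digits_sum_step (b k : ℕ) (hb : 2 ≤ b) :
    (Nat.digits b k).sum = k % b + (Nat.digits b (k / b)).sum := by
  rcases Nat.eq_zero_or_pos k with rfl | hk
  · simp
  · rw [Nat.digits_def' (by omega) hk, List.sum_cons]

theorem digits_sum_eq (b : ℕ) (hb : 2 ≤ b) : ∀ N k : ℕ, k ≤ N →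
    (Nat.digits b k).sum = ∑ i ∈ Finset.range N, digit b k i := by
  intro N
  induction N with
  | zero =>
    intro k hk
    obtain rfl : k = 0 := by omega
    simp
  | succ N ih =>
    intro k hk
    have h1 : k / b ≤ N := by
      have : k / b ≤ k / 2 := Nat.div_le_div_left hb (by omega)
      omega
    rw [digits_sum_step b k hb, ih _ h1, Finset.sum_range_succ']
    simp only [digit_succ]
    simp [digit, add_comm]

theorem sum_digit_extend (b l N : ℕ) (hb : 2 ≤ b) (h : l ≤ N) (g : ℕ → ZMod b) :
    ∑ i ∈ Finset.range N, g i * (digit b l i : ZMod b) =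
      ∑ i ∈ Finset.range l, g i * (digit b l i : ZMod b) := by
  symm
  apply Finset.sum_subset
  · intro x hx
    simp only [Finset.mem_range] at *
    omega
  · intro x _ hx
    rw [digit_eq_zero b l x hb (by simpa using hx)]
    simp

theorem TmulC_apply (b : ℕ) {m : ℕ} (hb : 2 ≤ b) (C : ℕ → Fin m → ZMod b) (i : ℕ) (c : Fin m) :
    TmulC b C i c = C (i + 1) c - C 0 c := by
  unfold TmulC
  rw [finsum_eq_sum_of_support_subset (s := {0, i + 1})]
  · rw [Finset.sum_pair (by omega)]
    simp only [Tmat, if_true, if_neg (Nat.succ_ne_zero i)]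
    rw [Nat.cast_sub (by omega)]
    simp
    ring
  · intro j hj
    by_contra hne
    simp at hne
    apply hj
    simp [Tmat, hne.1, hne.2]

theorem key (b k : ℕ) {m : ℕ} (hb : 2 ≤ b) (C : ℕ → Fin m → ZMod b) (c : Fin m)
    (h : b ∣ (Nat.digits b k).sum) :
    ∑ i ∈ Finset.range (k / b + 1), TmulC b C i c * (digit b (k / b) i : ZMod b) =
      ∑ i ∈ Finset.range (k + 1), C i c * (digit b k i : ZMod b) := by
  have hle : k / b ≤ k := Nat.div_le_self k b
  rw [sum_digit_extend b (k / b) _ hb (by omega),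
    ← sum_digit_extend b (k / b) k hb hle, Finset.sum_range_succ']
  rw [digits_sum_eq b hb (k + 1) k (by omega), ← ZMod.natCast_eq_zero_iff,
    Finset.sum_range_succ'] at h
  push_cast at h
  simp only [digit_succ, TmulC_apply b hb, sub_mul, Finset.sum_sub_distrib] at h ⊢
  rw [← Finset.mul_sum]
  linear_combination (-C 0 c) * h

theorem exists_lift (b l : ℕ) (hb : 2 ≤ b) :
    ∃ k, k / b = l ∧ b ∣ (Nat.digits b k).sum := by
  set S := (Nat.digits b l).sum with hS
  have hr : (b - S % b) % b < b := Nat.mod_lt _ (by omega)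
  have hd : (b * l + (b - S % b) % b) / b = l := by
    rw [Nat.mul_add_div (by omega), Nat.div_eq_of_lt hr, add_zero]
  refine ⟨b * l + (b - S % b) % b, hd, ?_⟩
  rw [digits_sum_step b _ hb, hd, ← hS, Nat.mul_add_mod, Nat.mod_mod]
  have hlt : S % b < b := Nat.mod_lt _ (by omega)
  apply Nat.dvd_of_mod_eq_zero
  rw [Nat.mod_add_mod, Nat.add_mod_eq_add_mod_left (b - S % b) (Nat.mod_mod S b).symm,
    Nat.sub_add_cancel hlt.le, Nat.mod_self]

/-- The dual net of the folded digital net (the net generated by `T C₁, …, T C_s`) is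
`{⌊k/b⌋ : k ∈ E₀^s ∩ 𝒫^⊥}`, where `E₀` is the set of `k ∈ ℕ₀` whose `b`-adic digit sum
is divisible by `b`. -/
theorem dual_folded_net (b s m : ℕ) (hb : 2 ≤ b) (hs : 0 < s) (hm : 0 < m)
    (C : Fin s → ℕ → Fin m → ZMod b) :
    dualNet b (fun j => TmulC b (C j)) =
      (fun (k : Fin s → ℕ) (j : Fin s) => k j / b) ''
        {k | (∀ j, (b : ℕ) ∣ (Nat.digits b (k j)).sum) ∧ k ∈ dualNet b C} := by
  ext l
  constructor
  · intro hl
    choose k hk1 hk2 using fun j => exists_lift b (l j) hb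
    refine ⟨k, ⟨hk2, ?_⟩, funext hk1⟩
    intro c
    rw [← hl c]
    refine Finset.sum_congr rfl fun j _ => ?_
    rw [← key b (k j) hb (C j) c (hk2 j), hk1]
  · rintro ⟨k, ⟨hk2, hk⟩, rfl⟩
    intro c
    rw [← hk c]
    exact Finset.sum_congr rfl fun j _ => key b (k j) hb (C j) c (hk2 j)

end QMC
end

section
/- Let b be prime, α ≥ 2 an integer, m a positive integer, and n a positive integer with n ≥ αm/2. Let p ∈ 𝔽_b[x] be irreducible with deg(p) = n, γ_1,…,γ_s ≥ 0 weights and D > 0 a constant, and let q = (q_1,…,q_s) ∈ R_{b,n}^s be obtained by the component-by-component algorithm (each q_τ minimizing q̃ ↦ B_α((q_1,…,q_{τ−1}, q̃), p) over R_{b,n}). Then for every real λ with 1/α < λ ≤ 1, B_α(q, p) ≤ b^{−m/λ} [ −1 + ∏_{j=1}^{s} (1 + γ_j^{λ/2} D^{λ/2} A_{α,b,λ}) ]^{1/λ}, where A_{α,b,λ} = A₁ + A₂ with A₁ = (b/(b−1)) [ Σ_{v=1}^{α−1} ∏_{i=1}^{v} (b−1)/(b^{λi}−1) + ((b^{λα}−1)/(b^{λα}−b))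 ∏_{i=1}^{α} (b−1)/(b^{λi}−1) ] and A₂ = (1/(b−1)) Σ_{v=2}^{α−1} ∏_{i=1}^{v} (b^{λ}(b−1))/(b^{λi}−1) + (b^{λ}/(b^{λα}−b)) ∏_{i=1}^{α−1} (b^{λ}(b−1))/(b^{λi}−1). -/
namespace QMC

/-- `μ_α(k) = a₁ + ⋯ + a_{min(v,α)}`, the sum of the `α` largest positions (counted
from `1`) of nonzero `b`-adic digits of `k`; `μ_α(0) = 0`. -/
def mualpha (b α k : ℕ) : ℕ :=
  (((((Finset.range (k + 1)).filter fun i => digit b k i ≠ 0).sort (· ≤ ·)).reverse.take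
    α).map (· + 1)).sum

/-- the set `E` of positive integers whose `b`-adic digit sum is divisible by `b`. -/
def Eset (b : ℕ) : Set ℕ := {k | k ≠ 0 ∧ (b : ℕ) ∣ (Nat.digits b k).sum}

/-- the truncated polynomial `tr_n(k)(x) = κ₀ + κ₁ x + ⋯ + κ_{n-1} x^{n-1}`. -/
noncomputable def trunc (b n k : ℕ) : Polynomial (ZMod b) :=
  ∑ i ∈ Finset.range n, Polynomial.C ((digit b k i : ℕ) : ZMod b) * Polynomial.X ^ i

/-- the quality criterion `B_α((q_1,…,q_τ), p)` (a bound on the squared worst-case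
error of the folded higher order polynomial lattice rule). -/
noncomputable def Bcrit (b α m n : ℕ) [Fact b.Prime] (γ : ℕ → ℝ) (D : ℝ)
    (p : Polynomial (ZMod b)) (τ : ℕ) (q : ℕ → Polynomial (ZMod b)) : ℝ :=
  ∑ u ∈ (Finset.range τ).powerset.filter (fun u => u.Nonempty),
    Real.sqrt (∏ j ∈ u, γ j) * Real.sqrt D ^ u.card *
      ∑' f : {f : ℕ → ℕ // (∀ j ∈ u, f j ∈ Eset b) ∧ (∀ j ∉ u, f j = 0) ∧
          ((∑ j ∈ Finset.range τ, trunc b n (f j) * q j) % p).degree <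
            ((n - m : ℕ) : WithBot ℕ)},
        ((b : ℝ) ^ ∑ j ∈ u, mualpha b α (f.1 j / b))⁻¹

/-- the constant `A_{α,b,λ,1}`. -/
noncomputable def A1 (b α : ℕ) (lam : ℝ) : ℝ :=
  ((b : ℝ) / ((b : ℝ) - 1)) *
    (∑ v ∈ Finset.Icc 1 (α - 1), ∏ i ∈ Finset.Icc 1 v,
        ((b : ℝ) - 1) / ((b : ℝ) ^ (lam * i) - 1) +
      (((b : ℝ) ^ (lam * α) - 1) / ((b : ℝ) ^ (lam * α) - b)) *
        ∏ i ∈ Finset.Icc 1 α, ((b : ℝ) - 1) / ((b : ℝ) ^ (lam * i) - 1))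

/-- the constant `A_{α,b,λ,2}`. -/
noncomputable def A2 (b α : ℕ) (lam : ℝ) : ℝ :=
  (1 / ((b : ℝ) - 1)) * ∑ v ∈ Finset.Icc 2 (α - 1), ∏ i ∈ Finset.Icc 1 v,
      ((b : ℝ) ^ lam * ((b : ℝ) - 1)) / ((b : ℝ) ^ (lam * i) - 1) +
    ((b : ℝ) ^ lam / ((b : ℝ) ^ (lam * α) - b)) *
      ∏ i ∈ Finset.Icc 1 (α - 1), ((b : ℝ) ^ lam * ((b : ℝ) - 1)) / ((b : ℝ) ^ (lam * i) - 1)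

end QMC
namespace QMC

/-- decreasing list of positions of nonzero digits -/
def pos (b k : ℕ) : List ℕ :=
  (((Finset.range (k + 1)).filter fun i => digit b k i ≠ 0).sort (· ≤ ·)).reverse

lemma mualpha_eq (b α k : ℕ) : mualpha b α k = (((pos b k).take α).map (· + 1)).sum := rfl

lemma pos_zero (b : ℕ) : pos b 0 = [] := by
  simp [pos, digit]

lemma digit_ne_zero_le {b : ℕ} (hb : 2 ≤ b) {k i : ℕ} (h : digit b k i ≠ 0) : i ≤ k := by
  by_contra hlt
  push Not at hlt
  apply h
  have : k < b ^ i := lt_trans hlt (Nat.lt_pow_self (by omega))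
  simp [digit, Nat.div_eq_of_lt this]

lemma pos_rec {b : ℕ} (hb : 2 ≤ b) (k c : ℕ) (hc : c < b) :
    pos b (b * k + c) = (pos b k).map (· + 1) ++ (if c = 0 then [] else [0]) := by
  have hd0 : digit b (b * k + c) 0 = c := by
    simp [digit, Nat.mod_eq_of_lt hc]
  have hds : ∀ i, digit b (b * k + c) (i + 1) = digit b k i := by
    intro i
    have : (b * k + c) / b = k := by
      rw [Nat.mul_add_div (by omega), Nat.div_eq_of_lt hc, add_zero]
    simp only [digit]
    rw [pow_succ', ← Nat.div_div_eq_div_mul, this]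
  have key : ((Finset.range (b * k + c + 1)).filter fun i => digit b (b * k + c) i ≠ 0).sort (· ≤ ·)
      = (if c = 0 then [] else [0]) ++
        (((Finset.range (k + 1)).filter fun i => digit b k i ≠ 0).sort (· ≤ ·)).map (· + 1) := by
    set L := (((Finset.range (k + 1)).filter fun i => digit b k i ≠ 0).sort (· ≤ ·)) with hL
    have hLs : L.Pairwise (· < ·) := by
      rw [hL]; exact (Finset.sortedLT_sort _).pairwise
    have hLm : ∀ i, i ∈ L ↔ digit b k i ≠ 0 := by
      intro i
      rw [hL]
      simp only [Finset.mem_sort, Finset.mem_filter, Finset.mem_range]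
      constructor
      · exact fun h => h.2
      · intro h
        exact ⟨by have := digit_ne_zero_le hb h; omega, h⟩
    have hp : ((if c = 0 then [] else [0]) ++ L.map (· + 1)).Pairwise (· < ·) := by
      have h1 : (L.map (· + 1)).Pairwise (· < ·) := by
        rw [List.pairwise_map]
        exact hLs.imp (by intro a b h; omega)
      split_ifs with h
      · simpa using h1
      · simp only [List.cons_append, List.nil_append, List.pairwise_cons]
        refine ⟨?_, h1⟩
        intro a ha
        simp only [List.mem_map] at ha
        obtain ⟨x, _, rfl⟩ := ha
        omega
    have hfs : (Finset.range (b * k + c + 1)).filter (fun i => digit b (b * k + c) i ≠ 0)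
        = ((if c = 0 then [] else [0]) ++ L.map (· + 1)).toFinset := by
      ext i
      simp only [Finset.mem_filter, Finset.mem_range, List.mem_toFinset, List.mem_append,
        List.mem_map]
      have hiff : (i < b * k + c + 1 ∧ digit b (b * k + c) i ≠ 0) ↔ digit b (b * k + c) i ≠ 0 := by
        constructor
        · exact fun h => h.2
        · intro h
          exact ⟨by have := digit_ne_zero_le hb h; omega, h⟩
      rw [hiff]
      rcases i with _ | i
      · rw [hd0]
        split_ifs with h <;> simp [h]
      · rw [hds]
        simp only [hLm]
        split_ifs with h <;> simp
    rw [hfs]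
    exact (List.toFinset_sort (· ≤ ·) (hp.imp (by intro a b h; omega))).mpr
      (hp.imp (by intro a b h; omega))
  unfold pos
  rw [key, List.reverse_append, List.map_reverse]
  congr 1
  split_ifs <;> simp

/-- truncated number of nonzero digits -/
def wt (b α k : ℕ) : ℕ := min (pos b k).length α

lemma sum_map_add_one (L : List ℕ) : (L.map (· + 1)).sum = L.sum + L.length := by
  induction L with
  | nil => simp
  | cons a t ih => simp [ih]; omega

lemma wt_zero (b α : ℕ) : wt b α 0 = 0 := by simp [wt, pos_zero]
lemma mu_zero (b α : ℕ) : mualpha b α 0 = 0 := by simp [mualpha_eq, pos_zero]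

lemma wt_le (b α k : ℕ) : wt b α k ≤ α := min_le_right _ _

lemma step_zero {b : ℕ} (hb : 2 ≤ b) (α k : ℕ) :
    wt b α (b * k) = wt b α k ∧ mualpha b α (b * k) = mualpha b α k + wt b α k := by
  have h := pos_rec hb k 0 (by omega)
  simp only [add_zero, if_true, List.append_nil] at h
  constructor
  · simp [wt, h]
  · rw [mualpha_eq, mualpha_eq, h, ← List.map_take, sum_map_add_one]
    simp [wt, min_comm]

lemma step_full {b : ℕ} (hb : 2 ≤ b) (α k c : ℕ) (hc : c < b) (hw : wt b α k = α) :
    wt b α (b * k + c) = α ∧ mualpha b α (b * k + c) = mualpha b α k + α := by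
  have h := pos_rec hb k c hc
  have hl : α ≤ (pos b k).length := by
    unfold wt at hw; omega
  constructor
  · simp only [wt, h, List.length_append, List.length_map]; omega
  · rw [mualpha_eq, mualpha_eq, h, List.take_append_of_le_length (by simpa using hl),
      ← List.map_take, sum_map_add_one]
    simp [hl]

lemma step_ne {b : ℕ} (hb : 2 ≤ b) (α k c : ℕ) (hc : c < b) (hc0 : c ≠ 0) (hw : wt b α k < α) :
    wt b α (b * k + c) = wt b α k + 1 ∧
      mualpha b α (b * k + c) = mualpha b α k + (wt b α k + 1) := by
  have h := pos_rec hb k c hc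
  have hl : (pos b k).length < α := by
    unfold wt at hw; omega
  rw [if_neg hc0] at h
  constructor
  · simp only [wt, h, List.length_append, List.length_map, List.length_singleton]; omega
  · rw [mualpha_eq, mualpha_eq, h, List.take_of_length_le (by simp; omega),
      List.take_of_length_le (by omega)]
    simp only [List.map_append, List.sum_append, sum_map_add_one]
    simp [wt]
    omega

lemma step_pow {b : ℕ} (hb : 2 ≤ b) (α k r : ℕ) :
    wt b α (b ^ r * k) = wt b α k ∧ mualpha b α (b ^ r * k) = mualpha b α k + r * wt b α k := by
  induction r with
  | zero => simp
  | succ r ih =>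
    have := step_zero hb α (b ^ r * k)
    rw [pow_succ', mul_assoc, this.1, this.2, ih.1, ih.2]
    refine ⟨rfl, by ring⟩

lemma ds_rec {b : ℕ} (hb : 2 ≤ b) (k c : ℕ) (hc : c < b) :
    (Nat.digits b (b * k + c)).sum = c + (Nat.digits b k).sum := by
  by_cases h : b * k + c = 0
  · have h1 : c = 0 := by omega
    have h2 : k = 0 := by
      subst h1
      simpa [show b ≠ 0 by omega] using h
    subst h1 h2; simp
  · rw [Nat.digits_def' (by omega) (by omega), List.sum_cons]
    congr 1
    · simp [Nat.mod_eq_of_lt hc]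
    · rw [Nat.mul_add_div (by omega), Nat.div_eq_of_lt hc, add_zero]

lemma len_pos {b : ℕ} (hb : 2 ≤ b) (k : ℕ) :
    ((pos b k).length = 0 → k = 0) ∧
    ((pos b k).length = 1 → ¬ b ∣ (Nat.digits b k).sum) := by
  induction k using Nat.strong_induction_on with
  | _ k ih =>
    by_cases hk : k = 0
    · subst hk; simp [pos_zero]
    have hlt : k / b < k := Nat.div_lt_self (by omega) (by omega)
    have hc : k % b < b := Nat.mod_lt _ (by omega)
    have h := pos_rec hb (k / b) (k % b) hc
    have hd := ds_rec hb (k / b) (k % b) hc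
    have hkk : b * (k / b) + k % b = k := Nat.div_add_mod k b
    rw [hkk] at h hd
    obtain ⟨ih1, ih2⟩ := ih _ hlt
    rw [h, hd]
    by_cases h0 : k % b = 0
    · simp only [h0, if_true, List.append_nil, List.length_map, zero_add]
      refine ⟨fun hh => ?_, ih2⟩
      rw [ih1 hh, h0] at hkk
      omega
    · simp only [h0, if_false, List.length_append, List.length_map, List.length_singleton]
      refine ⟨by omega, fun hh => ?_⟩
      have : k / b = 0 := ih1 (by omega)
      rw [this]
      simp only [Nat.digits_zero, List.sum_nil, add_zero]
      exact fun hdv => h0 (Nat.eq_zero_of_dvd_of_lt hdv hc)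

lemma wt_two_le {b α : ℕ} (hb : 2 ≤ b) (hα : 2 ≤ α) {k : ℕ} (hk : k ∈ Eset b) : 2 ≤ wt b α k := by
  have h := len_pos hb k
  obtain ⟨h1, h2⟩ := hk
  have h3 : (pos b k).length ≠ 0 := fun hh => h1 (h.1 hh)
  have h4 : (pos b k).length ≠ 1 := fun hh => h.2 hh h2
  unfold wt; omega

/-- last digit is determined -/
lemma E_unique {b : ℕ} (hb : 2 ≤ b) {k c c' : ℕ} (hc : c < b) (hc' : c' < b)
    (h : b * k + c ∈ Eset b) (h' : b * k + c' ∈ Eset b) : c = c' := by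
  have h1 := h.2
  have h2 := h'.2
  rw [ds_rec hb k _ hc] at h1
  rw [ds_rec hb k _ hc'] at h2
  have : c + (Nat.digits b k).sum ≡ c' + (Nat.digits b k).sum [MOD b] :=
    ((Nat.modEq_zero_iff_dvd).2 h1).trans ((Nat.modEq_zero_iff_dvd).2 h2).symm
  have := Nat.ModEq.add_right_cancel' _ this
  exact Nat.ModEq.eq_of_lt_of_lt this hc hc'

lemma E_div_ne {b : ℕ} (hb : 2 ≤ b) {k : ℕ} (h : k ∈ Eset b) : k / b ≠ 0 := by
  intro h0
  have hlt : k < b := by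
    rcases Nat.div_eq_zero_iff.1 h0 with h | h <;> omega
  have h2 := h.2
  have hd := ds_rec hb 0 k hlt
  simp only [mul_zero, zero_add, Nat.digits_zero, List.sum_nil, add_zero] at hd
  rw [hd] at h2
  exact h.1 (Nat.eq_zero_of_dvd_of_lt h2 hlt)

lemma E_div_inj {b : ℕ} (hb : 2 ≤ b) {k l : ℕ} (h : k ∈ Eset b) (h' : l ∈ Eset b)
    (he : k / b = l / b) : k = l := by
  have e1 := Nat.div_add_mod k b
  have e2 := Nat.div_add_mod l b
  have := E_unique hb (k := k / b) (c := k % b) (c' := l % b) (Nat.mod_lt _ (by omega))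
    (Nat.mod_lt _ (by omega)) (by rwa [e1]) (by rw [he, e2]; exact h')
  rw [← e1, ← e2, he, this]

lemma E_mul {b : ℕ} (hb : 2 ≤ b) {k : ℕ} : b * k ∈ Eset b ↔ k ∈ Eset b := by
  have := ds_rec hb k 0 (by omega)
  simp only [add_zero, zero_add] at this
  simp only [Eset, Set.mem_ofPred_eq, this]
  simp [show b ≠ 0 by omega]

lemma E_mul_pow {b : ℕ} (hb : 2 ≤ b) {k : ℕ} (r : ℕ) : b ^ r * k ∈ Eset b ↔ k ∈ Eset b := by
  induction r with
  | zero => simp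
  | succ r ih => rw [pow_succ', mul_assoc, E_mul hb, ih]

end QMC
namespace QMC

lemma sum_range_mul' (b M : ℕ) (f : ℕ → ℝ) :
    ∑ k ∈ Finset.range (b * M), f k =
      ∑ k ∈ Finset.range M, ∑ c ∈ Finset.range b, f (b * k + c) := by
  induction M with
  | zero => simp
  | succ M ih => rw [Nat.mul_succ, Finset.sum_range_add, ih, Finset.sum_range_succ]

/-- product constant -/
noncomputable def Cst (b : ℕ) (y : ℝ) (v : ℕ) : ℝ :=
  ∏ i ∈ Finset.Icc 1 v, ((b : ℝ) - 1) / (y ^ i - 1)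

lemma Cst_zero (b : ℕ) (y : ℝ) : Cst b y 0 = 1 := by simp [Cst]

lemma Cst_succ (b : ℕ) (y : ℝ) (v : ℕ) :
    Cst b y (v + 1) = Cst b y v * (((b : ℝ) - 1) / (y ^ (v + 1) - 1)) := by
  rw [Cst, Finset.prod_Icc_succ_top (by omega)]; rfl

lemma Cst_nonneg {b : ℕ} (hb : 2 ≤ b) {y : ℝ} (hy : 1 < y) (v : ℕ) : 0 ≤ Cst b y v := by
  apply Finset.prod_nonneg
  intro i hi
  have h1 : (2 : ℝ) ≤ b := by exact_mod_cast hb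
  have h2 : 1 ≤ y ^ i := one_le_pow₀ hy.le
  apply div_nonneg <;> linarith

/-- partial sums over numbers with a given truncated weight -/
noncomputable def Vs (b α : ℕ) (y : ℝ) (N v : ℕ) : ℝ :=
  ∑ k ∈ Finset.range (b ^ N), if wt b α k = v then (y⁻¹) ^ mualpha b α k else 0

open Classical in
/-- partial sums over elements of `E` with a given truncated weight -/
noncomputable def Us (b α : ℕ) (y : ℝ) (N v : ℕ) : ℝ :=
  ∑ k ∈ Finset.range (b ^ N), if k ∈ Eset b ∧ wt b α k = v then (y⁻¹) ^ mualpha b α k else 0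

lemma V_step_zero {b α : ℕ} (hb : 2 ≤ b) (hα : 2 ≤ α) (y : ℝ) (N : ℕ) :
    Vs b α y (N + 1) 0 = Vs b α y N 0 := by
  unfold Vs
  rw [pow_succ', sum_range_mul']
  apply Finset.sum_congr rfl
  intro k _
  have h0 := step_zero hb α k
  rw [Finset.sum_eq_single 0]
  · rw [add_zero, h0.1, h0.2]
    split_ifs with h
    · rw [h, add_zero]
    · rfl
  · intro c hc hc0
    rw [if_neg]
    by_cases hw : wt b α k = α
    · rw [(step_full hb α k c (Finset.mem_range.1 hc) hw).1]; omega
    · rw [(step_ne hb α k c (Finset.mem_range.1 hc) hc0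
        (lt_of_le_of_ne (wt_le _ _ _) hw)).1]; omega
  · intro h; exact absurd (Finset.mem_range.2 (by omega)) h

lemma sum_range_const_ne {b : ℕ} (hb : 2 ≤ b) (f : ℕ → ℝ) (B : ℝ)
    (h : ∀ c ∈ Finset.range b, c ≠ 0 → f c = B) :
    ∑ c ∈ Finset.range b, f c = f 0 + ((b : ℝ) - 1) * B := by
  obtain ⟨d, rfl⟩ : ∃ d, b = d + 1 := ⟨b - 1, by omega⟩
  rw [Finset.sum_range_succ', Finset.sum_congr rfl (g := fun _ => B)]
  · simp; ring
  · intro i hi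
    exact h _ (Finset.mem_range.2 (by have := Finset.mem_range.1 hi; omega)) (by omega)

lemma V_step_mid {b α : ℕ} (hb : 2 ≤ b) (y : ℝ) (N v : ℕ) (hv : v + 1 < α) :
    Vs b α y (N + 1) (v + 1) =
      (y⁻¹) ^ (v + 1) * (Vs b α y N (v + 1) + ((b : ℝ) - 1) * Vs b α y N v) := by
  unfold Vs
  rw [pow_succ', sum_range_mul', Finset.mul_sum, ← Finset.sum_add_distrib, Finset.mul_sum]
  apply Finset.sum_congr rfl
  intro k _
  have h0 := step_zero hb α k
  rw [sum_range_const_ne hb _ (if wt b α k = v then (y⁻¹) ^ (mualpha b α k + (v + 1)) else 0)]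
  · rw [add_zero, h0.1, h0.2]
    split_ifs with h1 h2 h2
    · omega
    · rw [h1]; ring
    · ring
    · ring
  · intro c hc hc0
    have hc := Finset.mem_range.1 hc
    by_cases hw : wt b α k = α
    · rw [(step_full hb α k c hc hw).1, if_neg (by omega), if_neg (by omega)]
    · have := step_ne hb α k c hc hc0 (lt_of_le_of_ne (wt_le _ _ _) hw)
      rw [this.1, this.2]
      by_cases h : wt b α k = v
      · simp [h]
      · rw [if_neg (by omega), if_neg h]

lemma V_step_top {b α : ℕ} (hb : 2 ≤ b) (y : ℝ) (N v : ℕ) (hv : v + 1 = α) :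
    Vs b α y (N + 1) α =
      (y⁻¹) ^ α * (b * Vs b α y N α + ((b : ℝ) - 1) * Vs b α y N v) := by
  unfold Vs
  rw [pow_succ', sum_range_mul', Finset.mul_sum, Finset.mul_sum, ← Finset.sum_add_distrib,
    Finset.mul_sum]
  apply Finset.sum_congr rfl
  intro k _
  have h0 := step_zero hb α k
  rw [sum_range_const_ne hb _ ((if wt b α k = v then (y⁻¹) ^ (mualpha b α k + α) else 0) +
    (if wt b α k = α then (y⁻¹) ^ (mualpha b α k + α) else 0))]
  · rw [add_zero, h0.1, h0.2]
    split_ifs with h1 h2 h2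
    · omega
    · rw [h1]; ring
    · ring
    · ring
  · intro c hc hc0
    have hc := Finset.mem_range.1 hc
    by_cases hw : wt b α k = α
    · have := step_full hb α k c hc hw
      rw [this.1, this.2, if_pos rfl, if_neg (by omega), if_pos hw, zero_add]
    · have := step_ne hb α k c hc hc0 (lt_of_le_of_ne (wt_le _ _ _) hw)
      rw [this.1, this.2]
      by_cases h : wt b α k = v
      · simp [h, hv, show v ≠ α by omega]
      · rw [if_neg (by omega), if_neg h, if_neg hw, add_zero]

/-- limiting value of the top class -/
noncomputable def Ctop (b α : ℕ) (y : ℝ) : ℝ := Cst b y (α - 1) * (((b : ℝ) - 1) / (y ^ α - b))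

lemma V_bound {b α : ℕ} (hb : 2 ≤ b) (hα : 2 ≤ α) {y : ℝ} (hy : 1 < y) (hyb : (b : ℝ) < y ^ α)
    (N : ℕ) : (∀ v < α, Vs b α y N v ≤ Cst b y v) ∧ Vs b α y N α ≤ Ctop b α y := by
  have hb' : (2 : ℝ) ≤ b := by exact_mod_cast hb
  have hct : 0 ≤ Ctop b α y := mul_nonneg (Cst_nonneg hb hy _)
    (div_nonneg (by linarith) (by linarith))
  induction N with
  | zero =>
    have h : ∀ v, Vs b α y 0 v = if v = 0 then 1 else 0 := by
      intro v
      simp [Vs, wt_zero, mu_zero, eq_comm]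
    refine ⟨fun v _ => ?_, ?_⟩
    · rw [h]
      split_ifs with hv
      · rw [hv, Cst_zero]
      · exact Cst_nonneg hb hy v
    · rw [h, if_neg (by omega)]; exact hct
  | succ N ih =>
    obtain ⟨ih1, ih2⟩ := ih
    refine ⟨fun v hv => ?_, ?_⟩
    · rcases v with _ | v
      · rw [V_step_zero hb hα]; exact ih1 0 hv
      · rw [V_step_mid hb y N v hv]
        have h1 := ih1 _ hv
        have h2 := ih1 v (by omega)
        have hp : 1 < y ^ (v + 1) := one_lt_pow₀ hy (by omega)
        calc _ ≤ (y⁻¹) ^ (v + 1) * (Cst b y (v + 1) + ((b : ℝ) - 1) * Cst b y v) := by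
              have : 0 ≤ (b : ℝ) - 1 := by linarith
              gcongr
          _ = Cst b y (v + 1) := by
              rw [Cst_succ, inv_pow]
              have : y ^ (v + 1) - 1 ≠ 0 := by linarith
              have : y ^ (v + 1) ≠ 0 := by linarith
              field_simp
              ring
    · obtain ⟨v, rfl⟩ : ∃ v, α = v + 1 := ⟨α - 1, by omega⟩
      rw [V_step_top hb y N v rfl]
      have h2 := ih1 v (by omega)
      calc _ ≤ (y⁻¹) ^ (v + 1) * (b * Ctop b (v + 1) y + ((b : ℝ) - 1) * Cst b y v) := by
            have : 0 ≤ (b : ℝ) - 1 := by linarith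
            gcongr
        _ = _ := by
              rw [Ctop, inv_pow, Nat.add_sub_cancel]
              have : y ^ (v + 1) - b ≠ 0 := by linarith
              have : y ^ (v + 1) ≠ 0 := by linarith
              field_simp
              ring

lemma sum_le_of_unique {b : ℕ} (f : ℕ → ℝ) (M : ℝ) (hM : 0 ≤ M)
    (h : ∀ c ∈ Finset.range b, f c ≤ M)
    (hu : ∀ c ∈ Finset.range b, ∀ c' ∈ Finset.range b, f c ≠ 0 → f c' ≠ 0 → c = c') :
    ∑ c ∈ Finset.range b, f c ≤ M := by
  by_cases hz : ∃ c ∈ Finset.range b, f c ≠ 0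
  · obtain ⟨c, hc, hc0⟩ := hz
    rw [Finset.sum_eq_single_of_mem c hc]
    · exact h c hc
    · intro c' hc' hne
      by_contra h0
      exact hne (hu c' hc' c hc h0 hc0)
  · push Not at hz
    rw [Finset.sum_eq_zero hz]; exact hM

open Classical in
lemma U_step_mid {b α : ℕ} (hb : 2 ≤ b) {y : ℝ} (hy : 1 < y) (N v : ℕ) (hv : v + 1 < α) :
    Us b α y (N + 1) (v + 1) ≤ (y⁻¹) ^ (v + 1) * (Us b α y N (v + 1) + Vs b α y N v) := by
  unfold Us Vs
  rw [pow_succ', sum_range_mul', ← Finset.sum_add_distrib, Finset.mul_sum]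
  have hx : 0 < y⁻¹ := by positivity
  apply Finset.sum_le_sum
  intro k _
  apply sum_le_of_unique
  · positivity
  · intro c hc
    have hc := Finset.mem_range.1 hc
    have hpp : 0 ≤ (y⁻¹) ^ (v + 1) * ((if k ∈ Eset b ∧ wt b α k = v + 1 then
      (y⁻¹) ^ mualpha b α k else 0) + if wt b α k = v then (y⁻¹) ^ mualpha b α k else 0) := by
      positivity
    by_cases h1 : b * k + c ∈ Eset b ∧ wt b α (b * k + c) = v + 1
    · rw [if_pos h1]
      obtain ⟨hE, hw1⟩ := h1
      by_cases hc0 : c = 0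
      · subst hc0
        rw [add_zero] at hE hw1 ⊢
        have h0 := step_zero hb α k
        rw [h0.1] at hw1
        rw [h0.2, if_pos ⟨(E_mul hb).1 hE, hw1⟩, if_neg (by omega), hw1]
        apply le_of_eq; ring
      · by_cases hw : wt b α k = α
        · rw [(step_full hb α k c hc hw).1] at hw1; omega
        · have := step_ne hb α k c hc hc0 (lt_of_le_of_ne (wt_le _ _ _) hw)
          have hwv : wt b α k = v := by omega
          rw [this.2, if_pos hwv, hwv, if_neg (by omega)]
          apply le_of_eq; ring
    · rw [if_neg h1]; exact hpp
  · intro c hc c' hc' h h'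
    have h1 : b * k + c ∈ Eset b := by
      by_contra hh; exact h (if_neg (fun q => hh q.1))
    have h2 : b * k + c' ∈ Eset b := by
      by_contra hh; exact h' (if_neg (fun q => hh q.1))
    exact E_unique hb (Finset.mem_range.1 hc) (Finset.mem_range.1 hc') h1 h2

open Classical in
lemma U_step_top {b α : ℕ} (hb : 2 ≤ b) {y : ℝ} (hy : 1 < y) (N v : ℕ) (hv : v + 1 = α) :
    Us b α y (N + 1) α ≤ (y⁻¹) ^ α * (Vs b α y N α + Vs b α y N v) := by
  unfold Us Vs
  rw [pow_succ', sum_range_mul', ← Finset.sum_add_distrib, Finset.mul_sum]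
  have hx : 0 < y⁻¹ := by positivity
  apply Finset.sum_le_sum
  intro k _
  apply sum_le_of_unique
  · positivity
  · intro c hc
    have hc := Finset.mem_range.1 hc
    have hpp : 0 ≤ (y⁻¹) ^ α * ((if wt b α k = α then
      (y⁻¹) ^ mualpha b α k else 0) + if wt b α k = v then (y⁻¹) ^ mualpha b α k else 0) := by
      positivity
    by_cases h1 : b * k + c ∈ Eset b ∧ wt b α (b * k + c) = α
    · rw [if_pos h1]
      obtain ⟨hE, hw1⟩ := h1
      by_cases hw : wt b α k = α
      · rw [(step_full hb α k c hc hw).2, if_pos hw, if_neg (by omega)]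
        apply le_of_eq; ring
      · by_cases hc0 : c = 0
        · subst hc0
          rw [add_zero, (step_zero hb α k).1] at hw1
          omega
        · have := step_ne hb α k c hc hc0 (lt_of_le_of_ne (wt_le _ _ _) hw)
          have hwv : wt b α k = v := by omega
          rw [this.2, if_pos hwv, hwv, if_neg (by omega), hv]
          apply le_of_eq; ring
    · rw [if_neg h1]; exact hpp
  · intro c hc c' hc' h h'
    have h1 : b * k + c ∈ Eset b := by
      by_contra hh; exact h (if_neg (fun q => hh q.1))
    have h2 : b * k + c' ∈ Eset b := by
      by_contra hh; exact h' (if_neg (fun q => hh q.1))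
    exact E_unique hb (Finset.mem_range.1 hc) (Finset.mem_range.1 hc') h1 h2

lemma Us_base {b α : ℕ} (y : ℝ) (v : ℕ) : Us b α y 0 v = 0 := by
  simp [Us, Eset]

lemma U_bound_mid {b α : ℕ} (hb : 2 ≤ b) (hα : 2 ≤ α) {y : ℝ} (hy : 1 < y)
    (hyb : (b : ℝ) < y ^ α) (v : ℕ) (hv : v + 1 < α) (N : ℕ) :
    Us b α y N (v + 1) ≤ Cst b y (v + 1) / ((b : ℝ) - 1) := by
  have hb' : (2 : ℝ) ≤ b := by exact_mod_cast hb
  induction N with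
  | zero =>
    rw [Us_base]
    exact div_nonneg (Cst_nonneg hb hy _) (by linarith)
  | succ N ih =>
    refine (U_step_mid hb hy N v hv).trans ?_
    have h2 := (V_bound hb hα hy hyb N).1 v (by omega)
    have hp : 1 < y ^ (v + 1) := one_lt_pow₀ hy (by omega)
    calc _ ≤ (y⁻¹) ^ (v + 1) * (Cst b y (v + 1) / ((b : ℝ) - 1) + Cst b y v) := by
          gcongr
      _ = _ := by
          rw [Cst_succ, inv_pow]
          have : y ^ (v + 1) - 1 ≠ 0 := by linarith
          have : y ^ (v + 1) ≠ 0 := by linarith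
          have : (b : ℝ) - 1 ≠ 0 := by linarith
          field_simp
          ring

lemma U_bound_top {b α : ℕ} (hb : 2 ≤ b) (hα : 2 ≤ α) {y : ℝ} (hy : 1 < y)
    (hyb : (b : ℝ) < y ^ α) (N : ℕ) :
    Us b α y N α ≤ Cst b y (α - 1) / (y ^ α - b) := by
  have hb' : (2 : ℝ) ≤ b := by exact_mod_cast hb
  have hC := Cst_nonneg hb hy (α - 1)
  rcases N with _ | N
  · rw [Us_base]
    exact div_nonneg hC (by linarith)
  · refine (U_step_top hb hy N (α - 1) (by omega)).trans ?_
    obtain ⟨h1, h2⟩ := V_bound hb hα hy hyb N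
    have h1 := h1 (α - 1) (by omega)
    calc _ ≤ (y⁻¹) ^ α * (Ctop b α y + Cst b y (α - 1)) := by
          gcongr
      _ ≤ _ := by
          rw [Ctop, inv_pow]
          have h3 : 0 < y ^ α - b := by linarith
          have h4 : 0 < y ^ α := by linarith
          have : (y ^ α)⁻¹ * (Cst b y (α - 1) * ((↑b - 1) / (y ^ α - ↑b)) + Cst b y (α - 1)) =
            (Cst b y (α - 1) / (y ^ α - b)) * ((y ^ α - 1) / y ^ α) := by
            field_simp; ring
          rw [this]
          apply mul_le_of_le_one_right (by positivity)
          rw [div_le_one h4]; linarith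

/-- total mass of nonzero numbers -/
lemma S_bound {b α : ℕ} (hb : 2 ≤ b) (hα : 2 ≤ α) {y : ℝ} (hy : 1 < y)
    (hyb : (b : ℝ) < y ^ α) (N : ℕ) :
    ∑ k ∈ Finset.range (b ^ N), (if k = 0 then 0 else (y⁻¹) ^ mualpha b α k) ≤
      ∑ v ∈ Finset.Icc 1 (α - 1), Cst b y v + Ctop b α y := by
  obtain ⟨h1, h2⟩ := V_bound hb hα hy hyb N
  have hx : 0 < y⁻¹ := by positivity
  calc _ ≤ ∑ k ∈ Finset.range (b ^ N), ∑ v ∈ Finset.Icc 1 α,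
        (if wt b α k = v then (y⁻¹) ^ mualpha b α k else 0) := by
        apply Finset.sum_le_sum
        intro k _
        rw [Finset.sum_ite_eq]
        by_cases hk : k = 0
        · rw [if_pos hk]; positivity
        · rw [if_neg hk, if_pos]
          rw [Finset.mem_Icc]
          refine ⟨?_, wt_le _ _ _⟩
          have := (len_pos hb k).1
          have h3 : (pos b k).length ≠ 0 := fun h => hk (this h)
          unfold wt; omega
    _ = ∑ v ∈ Finset.Icc 1 α, Vs b α y N v := by rw [Finset.sum_comm]; rfl
    _ = ∑ v ∈ Finset.Icc 1 (α - 1), Vs b α y N v + Vs b α y N α := by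
        obtain ⟨a, rfl⟩ : ∃ a, α = a + 1 := ⟨α - 1, by omega⟩
        rw [Finset.sum_Icc_succ_top (by omega)]; rfl
    _ ≤ _ := by
        refine add_le_add (Finset.sum_le_sum fun v hv => h1 v ?_) h2
        rw [Finset.mem_Icc] at hv; omega

open Classical in
lemma S2_bound {b α : ℕ} (hb : 2 ≤ b) (hα : 2 ≤ α) {y : ℝ} (hy : 1 < y)
    (hyb : (b : ℝ) < y ^ α) (N : ℕ) :
    ∑ k ∈ Finset.range (b ^ N), (if k ∈ Eset b then y ^ wt b α k * (y⁻¹) ^ mualpha b α k else 0) ≤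
      ∑ v ∈ Finset.Icc 2 (α - 1), y ^ v * (Cst b y v / ((b : ℝ) - 1)) +
        y ^ α * (Cst b y (α - 1) / (y ^ α - b)) := by
  have hx : 0 < y⁻¹ := by positivity
  calc _ = ∑ k ∈ Finset.range (b ^ N), ∑ v ∈ Finset.Icc 2 α,
        (y ^ v * if k ∈ Eset b ∧ wt b α k = v then (y⁻¹) ^ mualpha b α k else 0) := by
        apply Finset.sum_congr rfl
        intro k _
        by_cases hk : k ∈ Eset b
        · simp only [hk, true_and, if_true, mul_ite, mul_zero]
          rw [Finset.sum_ite_eq, if_pos]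
          rw [Finset.mem_Icc]
          exact ⟨wt_two_le hb hα hk, wt_le _ _ _⟩
        · simp [hk]
    _ = ∑ v ∈ Finset.Icc 2 α, y ^ v * Us b α y N v := by
        rw [Finset.sum_comm]
        simp only [Us, Finset.mul_sum]
    _ = ∑ v ∈ Finset.Icc 2 (α - 1), y ^ v * Us b α y N v + y ^ α * Us b α y N α := by
        obtain ⟨a, rfl⟩ : ∃ a, α = a + 1 := ⟨α - 1, by omega⟩
        rw [Finset.sum_Icc_succ_top (by omega)]; rfl
    _ ≤ _ := by
        have h2 := U_bound_top hb hα hy hyb N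
        refine add_le_add (Finset.sum_le_sum fun v hv => ?_) ?_
        · rw [Finset.mem_Icc] at hv
          have := U_bound_mid hb hα hy hyb (v - 1) (by omega) N
          rw [show v - 1 + 1 = v by omega] at this
          gcongr
        · gcongr

lemma rpow_facts {b α : ℕ} (hb : 2 ≤ b) (hα : 2 ≤ α) {lam : ℝ} (hl : 1 / (α : ℝ) < lam) :
    0 < lam ∧ 1 < (b : ℝ) ^ lam ∧ (b : ℝ) < ((b : ℝ) ^ lam) ^ α ∧
      ∀ i : ℕ, (b : ℝ) ^ (lam * i) = ((b : ℝ) ^ lam) ^ i := by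
  have hb' : (2 : ℝ) ≤ b := by exact_mod_cast hb
  have hα' : (2 : ℝ) ≤ α := by exact_mod_cast hα
  have h0 : 0 < lam := lt_trans (by positivity) hl
  have hi : ∀ i : ℕ, (b : ℝ) ^ (lam * i) = ((b : ℝ) ^ lam) ^ i := by
    intro i; rw [Real.rpow_mul (by linarith), Real.rpow_natCast]
  refine ⟨h0, Real.one_lt_rpow (by linarith) h0, ?_, hi⟩
  rw [← hi]
  have : 1 < lam * α := by
    rwa [div_lt_iff₀ (by linarith)] at hl
  calc (b : ℝ) = (b : ℝ) ^ (1 : ℝ) := by simp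
    _ < _ := Real.rpow_lt_rpow_of_exponent_lt (by linarith) this

lemma A1_ge {b α : ℕ} (hb : 2 ≤ b) (hα : 2 ≤ α) {lam : ℝ} (hl : 1 / (α : ℝ) < lam) :
    ∑ v ∈ Finset.Icc 1 (α - 1), Cst b ((b : ℝ) ^ lam) v + Ctop b α ((b : ℝ) ^ lam)
      ≤ A1 b α lam := by
  obtain ⟨h0, hy, hyb, hi⟩ := rpow_facts hb hα hl
  have hb' : (2 : ℝ) ≤ b := by exact_mod_cast hb
  unfold A1
  simp only [hi]
  set y := (b : ℝ) ^ lam with hydef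
  have hC : ∀ v, ∏ i ∈ Finset.Icc 1 v, ((b : ℝ) - 1) / (y ^ i - 1) = Cst b y v := fun _ => rfl
  simp only [hC]
  have ht : (y ^ α - 1) / (y ^ α - b) * Cst b y α = Ctop b α y := by
    obtain ⟨a, rfl⟩ : ∃ a, α = a + 1 := ⟨α - 1, by omega⟩
    rw [Cst_succ, Ctop, Nat.add_sub_cancel]
    have : y ^ (a + 1) - b ≠ 0 := by linarith
    have : y ^ (a + 1) - 1 ≠ 0 := by linarith
    field_simp
  rw [ht]
  have hnn : 0 ≤ ∑ v ∈ Finset.Icc 1 (α - 1), Cst b y v + Ctop b α y := by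
    apply add_nonneg
    · exact Finset.sum_nonneg fun v _ => Cst_nonneg hb hy v
    · exact mul_nonneg (Cst_nonneg hb hy _) (div_nonneg (by linarith) (by linarith))
  apply le_mul_of_one_le_left hnn
  rw [le_div_iff₀ (by linarith)]; linarith

lemma A2_eq {b α : ℕ} (hb : 2 ≤ b) (hα : 2 ≤ α) {lam : ℝ} (hl : 1 / (α : ℝ) < lam) :
    ∑ v ∈ Finset.Icc 2 (α - 1), ((b : ℝ) ^ lam) ^ v * (Cst b ((b : ℝ) ^ lam) v / ((b : ℝ) - 1)) +
        ((b : ℝ) ^ lam) ^ α * (Cst b ((b : ℝ) ^ lam) (α - 1) / (((b : ℝ) ^ lam) ^ α - b))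
      = A2 b α lam := by
  obtain ⟨h0, hy, hyb, hi⟩ := rpow_facts hb hα hl
  have hb' : (2 : ℝ) ≤ b := by exact_mod_cast hb
  unfold A2
  simp only [hi]
  set y := (b : ℝ) ^ lam with hydef
  have hC : ∀ v, ∏ i ∈ Finset.Icc 1 v, (y * ((b : ℝ) - 1)) / (y ^ i - 1) = y ^ v * Cst b y v := by
    intro v
    simp only [mul_div_assoc, Finset.prod_mul_distrib, Cst]
    simp
  simp only [hC]
  congr 1
  · rw [Finset.mul_sum]
    apply Finset.sum_congr rfl
    intro v _
    ring
  · obtain ⟨a, rfl⟩ : ∃ a, α = a + 1 := ⟨α - 1, by omega⟩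
    rw [Nat.add_sub_cancel]
    ring

lemma A1_nonneg {b α : ℕ} (hb : 2 ≤ b) (hα : 2 ≤ α) {lam : ℝ} (hl : 1 / (α : ℝ) < lam) :
    0 ≤ A1 b α lam := by
  obtain ⟨h0, hy, hyb, hi⟩ := rpow_facts hb hα hl
  have hb' : (2 : ℝ) ≤ b := by exact_mod_cast hb
  refine le_trans ?_ (A1_ge hb hα hl)
  apply add_nonneg
  · exact Finset.sum_nonneg fun v _ => Cst_nonneg hb hy v
  · exact mul_nonneg (Cst_nonneg hb hy _) (div_nonneg (by linarith) (by linarith))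

lemma A2_nonneg {b α : ℕ} (hb : 2 ≤ b) (hα : 2 ≤ α) {lam : ℝ} (hl : 1 / (α : ℝ) < lam) :
    0 ≤ A2 b α lam := by
  obtain ⟨h0, hy, hyb, hi⟩ := rpow_facts hb hα hl
  have hb' : (2 : ℝ) ≤ b := by exact_mod_cast hb
  have hy0 : 0 ≤ (b : ℝ) ^ lam := by linarith
  rw [← A2_eq hb hα hl]
  apply add_nonneg
  · refine Finset.sum_nonneg fun v _ => mul_nonneg (by positivity) (div_nonneg (Cst_nonneg hb hy v)
      (by linarith))
  · exact mul_nonneg (by positivity) (div_nonneg (Cst_nonneg hb hy _) (by linarith))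

end QMC
namespace QMC
open scoped ENNReal

lemma tsum_rpow_le {ι : Type*} (f : ι → ℝ≥0∞) {lam : ℝ} (h0 : 0 < lam) (h1 : lam ≤ 1) :
    (∑' i, f i) ^ lam ≤ ∑' i, f i ^ lam := by
  have hfin : ∀ s : Finset ι, (∑ i ∈ s, f i) ^ lam ≤ ∑ i ∈ s, f i ^ lam := by
    classical
    intro s
    induction s using Finset.induction_on with
    | empty => simp [h0]
    | insert a s ha ih =>
      rw [Finset.sum_insert ha, Finset.sum_insert ha]
      exact (ENNReal.rpow_add_le_add_rpow _ _ h0.le h1).trans (by gcongr)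
  have : (∑' i, f i) ≤ (∑' i, f i ^ lam) ^ lam⁻¹ := by
    rw [ENNReal.tsum_eq_iSup_sum]
    apply iSup_le
    intro s
    rw [ENNReal.le_rpow_inv_iff h0]
    exact (hfin s).trans (ENNReal.sum_le_tsum s)
  exact (ENNReal.le_rpow_inv_iff h0).1 this

lemma tsum_le_of_pow {b : ℕ} (hb : 2 ≤ b) (g : ℕ → ℝ) (hg : ∀ k, 0 ≤ g k) (M : ℝ)
    (h : ∀ N, ∑ k ∈ Finset.range (b ^ N), g k ≤ M) :
    ∑' k, ENNReal.ofReal (g k) ≤ ENNReal.ofReal M := by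
  rw [ENNReal.tsum_eq_iSup_nat' (N := fun N => b ^ N)
    (tendsto_pow_atTop_atTop_of_one_lt (by omega))]
  apply iSup_le
  intro N
  rw [← ENNReal.ofReal_sum_of_nonneg (fun i _ => hg i)]
  exact ENNReal.ofReal_le_ofReal (h N)

/-- basic weight -/
noncomputable def om (b α k : ℕ) : ℝ≥0∞ := ENNReal.ofReal (((b : ℝ) ^ mualpha b α (k / b))⁻¹)

lemma om_rpow {b α : ℕ} (hb : 2 ≤ b) (k : ℕ) {lam : ℝ} (h0 : 0 < lam) :
    om b α k ^ lam = ENNReal.ofReal ((((b : ℝ) ^ lam)⁻¹) ^ mualpha b α (k / b)) := by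
  have hb' : (0 : ℝ) < b := by
    have : 0 < b := by omega
    exact_mod_cast this
  rw [om, ENNReal.ofReal_rpow_of_nonneg (by positivity) h0.le]
  congr 1
  rw [Real.inv_rpow (by positivity), inv_pow, ← Real.rpow_natCast, ← Real.rpow_natCast,
    ← Real.rpow_mul hb'.le, ← Real.rpow_mul hb'.le, mul_comm]

open Classical in
lemma Esum {b α : ℕ} (hb : 2 ≤ b) (hα : 2 ≤ α) {lam : ℝ} (hl : 1 / (α : ℝ) < lam) :
    ∑' k, (if k ∈ Eset b then om b α k ^ lam else 0) ≤ ENNReal.ofReal (A1 b α lam) := by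
  obtain ⟨h0, hy, hyb, -⟩ := rpow_facts hb hα hl
  set y := (b : ℝ) ^ lam with hyd
  have hS := tsum_le_of_pow hb (fun k => if k = 0 then 0 else (y⁻¹) ^ mualpha b α k)
    (fun k => by split_ifs <;> positivity) _ (fun N => S_bound hb hα hy hyb N)
  refine le_trans ?_ (hS.trans (ENNReal.ofReal_le_ofReal (A1_ge hb hα hl)))
  have e1 : ∑' k, (if k ∈ Eset b then om b α k ^ lam else 0)
      = ∑' k : Eset b, om b α k ^ lam := by
    rw [tsum_subtype (Eset b) (fun k => om b α k ^ lam)]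
    rfl
  rw [e1]
  have hinj : Function.Injective (fun k : Eset b => (k : ℕ) / b) := by
    intro k l h
    exact Subtype.ext (E_div_inj hb k.2 l.2 h)
  refine le_trans (le_of_eq ?_) (ENNReal.tsum_comp_le_tsum_of_injective hinj _)
  congr 1
  ext k
  rw [om_rpow hb _ h0, if_neg (E_div_ne hb k.2)]

open Classical in
lemma Esum2 {b α m n : ℕ} (hb : 2 ≤ b) (hα : 2 ≤ α) (hn : 0 < n)
    (hnm : (α * m : ℝ) / 2 ≤ (n : ℝ)) {lam : ℝ} (hl : 1 / (α : ℝ) < lam) :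
    ∑' k, (if k ∈ Eset b ∧ b ^ n ∣ k then om b α k ^ lam else 0) ≤
      ENNReal.ofReal (((b : ℝ) ^ m)⁻¹ * A2 b α lam) := by
  obtain ⟨h0, hy, hyb, hi⟩ := rpow_facts hb hα hl
  have hb' : (2 : ℝ) ≤ b := by exact_mod_cast hb
  set y := (b : ℝ) ^ lam with hyd
  have hS := tsum_le_of_pow hb
    (fun k => if k ∈ Eset b then y ^ wt b α k * (y⁻¹) ^ mualpha b α k else 0)
    (fun k => by split_ifs <;> positivity) _ (fun N => S2_bound hb hα hy hyb N)
  rw [A2_eq hb hα hl] at hS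
  have hinj : Function.Injective (fun l : ℕ => b ^ n * l) := by
    intro k l h
    exact Nat.eq_of_mul_eq_mul_left (by positivity) h
  have hp : (y⁻¹) ^ (2 * n) ≤ ((b : ℝ) ^ m)⁻¹ := by
    rw [inv_pow]
    apply inv_anti₀ (by positivity)
    rw [hyd, ← hi, ← Real.rpow_natCast]
    apply Real.rpow_le_rpow_of_exponent_le (by linarith)
    have hα' : (2 : ℝ) ≤ α := by exact_mod_cast hα
    have h1 : 1 < lam * α := by rwa [div_lt_iff₀ (by linarith)] at hl
    have hm0 : (0 : ℝ) ≤ m := Nat.cast_nonneg m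
    push_cast
    nlinarith
  rw [← hinj.tsum_eq]
  · rw [ENNReal.ofReal_mul (by positivity)]
    refine le_trans ?_ (mul_le_mul_right hS _)
    rw [← ENNReal.tsum_mul_left]
    apply ENNReal.tsum_le_tsum
    intro l
    by_cases hE : l ∈ Eset b
    · rw [if_pos ⟨(E_mul_pow hb n).2 hE, dvd_mul_right _ _⟩, if_pos hE, om_rpow hb _ h0,
        ← ENNReal.ofReal_mul (by positivity)]
      apply ENNReal.ofReal_le_ofReal
      obtain ⟨r, rfl⟩ : ∃ r, n = r + 1 := ⟨n - 1, by omega⟩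
      have e : b ^ (r + 1) * l / b = b ^ r * l := by
        rw [pow_succ', mul_assoc, Nat.mul_div_cancel_left _ (by omega)]
      rw [e, (step_pow hb α l r).2]
      have hw := wt_two_le hb hα hE
      rw [← hyd]
      have hx1 : y⁻¹ ≤ 1 := inv_le_one_of_one_le₀ hy.le
      have e2 : y⁻¹ ^ (mualpha b α l + r * wt b α l) =
          (y⁻¹) ^ ((r + 1) * wt b α l) * (y ^ wt b α l * y⁻¹ ^ mualpha b α l) := by
        rw [add_mul, pow_add, pow_add, one_mul]
        have : y⁻¹ ^ wt b α l * y ^ wt b α l = 1 := by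
          rw [← mul_pow, inv_mul_cancel₀ (by linarith), one_pow]
        linear_combination (-(y⁻¹ ^ mualpha b α l) * y⁻¹ ^ (r * wt b α l)) * this
      rw [e2]
      gcongr
      refine le_trans ?_ hp
      apply pow_le_pow_of_le_one (by positivity) hx1
      nlinarith
    · rw [if_neg (fun h => hE ((E_mul_pow hb n).1 h.1))]
      exact zero_le
  · intro k hk
    rw [Function.mem_support] at hk
    have : k ∈ Eset b ∧ b ^ n ∣ k := by
      by_contra h; exact hk (if_neg h)
    obtain ⟨l, hl⟩ := this.2
    exact ⟨l, hl.symm⟩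

/-- finitely supported tuples -/
abbrev T (τ : ℕ) := {f : ℕ → ℕ // ∀ j, τ ≤ j → f j = 0}

/-- splitting off the last coordinate -/
def Tequiv (τ : ℕ) : T (τ + 1) ≃ ℕ × T τ where
  toFun f := (f.1 τ, ⟨Function.update f.1 τ 0, by
    intro j hj
    by_cases h : j = τ
    · simp [h]
    · rw [Function.update_of_ne h]; exact f.2 j (by omega)⟩)
  invFun x := ⟨Function.update x.2.1 τ x.1, by
    intro j hj
    rw [Function.update_of_ne (by omega)]; exact x.2.2 j (by omega)⟩
  left_inv f := by
    apply Subtype.ext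
    simp
  right_inv x := by
    obtain ⟨k, g, hg⟩ := x
    simp only [Function.update_self, Function.update_idem, Prod.mk.injEq, true_and]
    apply Subtype.ext
    simp only
    rw [← hg τ le_rfl, Function.update_eq_self]

open Classical in
/-- one-coordinate weight -/
noncomputable def wj (b α : ℕ) (c : ℝ≥0∞) (k : ℕ) : ℝ≥0∞ :=
  (if k ∈ Eset b then c * om b α k else 0) + (if k = 0 then 1 else 0)

/-- dual membership -/
def Dset (b m n : ℕ) [Fact b.Prime] (p h : Polynomial (ZMod b)) : Prop :=
  (h % p).degree < ((n - m : ℕ) : WithBot ℕ)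

open Classical in
/-- the criterion plus one -/
noncomputable def Cc (b α m n : ℕ) [Fact b.Prime] (c : ℕ → ℝ≥0∞) (p : Polynomial (ZMod b))
    (τ : ℕ) (q : ℕ → Polynomial (ZMod b)) : ℝ≥0∞ :=
  ∑' f : T τ, (∏ j ∈ Finset.range τ, wj b α (c j) (f.1 j)) *
    (if Dset b m n p (∑ j ∈ Finset.range τ, trunc b n (f.1 j) * q j) then 1 else 0)

/-- the criterion as an extended nonnegative real -/
noncomputable def BE (b α m n : ℕ) [Fact b.Prime] (c : ℕ → ℝ≥0∞) (p : Polynomial (ZMod b))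
    (τ : ℕ) (q : ℕ → Polynomial (ZMod b)) : ℝ≥0∞ :=
  ∑ u ∈ (Finset.range τ).powerset.filter (fun u => u.Nonempty),
      (∏ j ∈ u, c j) *
      ∑' f : {f : ℕ → ℕ // (∀ j ∈ u, f j ∈ Eset b) ∧ (∀ j ∉ u, f j = 0) ∧
          ((∑ j ∈ Finset.range τ, trunc b n (f j) * q j) % p).degree <
            ((n - m : ℕ) : WithBot ℕ)},
        ∏ j ∈ u, om b α (f.1 j)

lemma sqrt_prod' (u : Finset ℕ) (γ : ℕ → ℝ) (hγ : ∀ j, 0 ≤ γ j) :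
    Real.sqrt (∏ j ∈ u, γ j) = ∏ j ∈ u, Real.sqrt (γ j) := by
  classical
  induction u using Finset.induction_on with
  | empty => simp
  | insert a s ha ih => rw [Finset.prod_insert ha, Finset.prod_insert ha, Real.sqrt_mul (hγ a), ih]

lemma Bcrit_eq (b α m n : ℕ) [Fact b.Prime] (γ : ℕ → ℝ) (hγ : ∀ j, 0 ≤ γ j) (D : ℝ)
    (p : Polynomial (ZMod b)) (τ : ℕ) (q : ℕ → Polynomial (ZMod b))
    (hfin : BE b α m n (fun j => ENNReal.ofReal (Real.sqrt (γ j) * Real.sqrt D)) p τ q ≠ ⊤) :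
    Bcrit b α m n γ D p τ q =
      (BE b α m n (fun j => ENNReal.ofReal (Real.sqrt (γ j) * Real.sqrt D)) p τ q).toReal := by
  unfold BE at hfin ⊢
  unfold Bcrit
  rw [ENNReal.toReal_sum (by
    intro u hu
    exact (ENNReal.sum_ne_top.1 hfin) u hu)]
  apply Finset.sum_congr rfl
  intro u _
  rw [ENNReal.toReal_mul]
  congr 1
  · rw [ENNReal.toReal_prod, sqrt_prod' u γ hγ]
    simp_rw [ENNReal.toReal_ofReal (mul_nonneg (Real.sqrt_nonneg _) (Real.sqrt_nonneg D))]
    rw [Finset.prod_mul_distrib, Finset.prod_const]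
  · rw [ENNReal.tsum_toReal_eq]
    · congr 1
      ext f
      rw [ENNReal.toReal_prod, ← Finset.prod_pow_eq_pow_sum, ← Finset.prod_inv_distrib]
      apply Finset.prod_congr rfl
      intro j _
      rw [om, ENNReal.toReal_ofReal (by positivity)]
    · intro f
      exact ENNReal.prod_ne_top (fun j _ => ENNReal.ofReal_ne_top)

open Classical in
lemma Cc_eq (b α m n : ℕ) [Fact b.Prime] (c : ℕ → ℝ≥0∞)
    (p : Polynomial (ZMod b)) (τ : ℕ) (q : ℕ → Polynomial (ZMod b)) :
    Cc b α m n c p τ q = 1 + BE b α m n c p τ q := by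
  set P : Finset ℕ → Set (ℕ → ℕ) := fun u => {f | (∀ j ∈ u, f j ∈ Eset b) ∧ (∀ j ∉ u, f j = 0) ∧
          ((∑ j ∈ Finset.range τ, trunc b n (f j) * q j) % p).degree <
            ((n - m : ℕ) : WithBot ℕ)} with hP
  have hterm : ∀ u : Finset ℕ, (∏ j ∈ u, c j) * ∑' f : P u, ∏ j ∈ u, om b α (f.1 j) =
      ∑' f : ℕ → ℕ, if f ∈ P u then ∏ j ∈ u, (c j * om b α (f j)) else 0 := by
    intro u
    rw [tsum_subtype (P u) (fun f => ∏ j ∈ u, om b α (f j)), ← ENNReal.tsum_mul_left]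
    congr 1
    ext f
    rw [Set.indicator_apply]
    split_ifs
    · rw [Finset.prod_mul_distrib]
    · simp
  have hBE : 1 + BE b α m n c p τ q = ∑ u ∈ (Finset.range τ).powerset,
      (∏ j ∈ u, c j) * ∑' f : P u, ∏ j ∈ u, om b α (f.1 j) := by
    have h0 : (∏ j ∈ (∅ : Finset ℕ), c j) * ∑' f : P ∅, ∏ j ∈ (∅ : Finset ℕ), om b α (f.1 j) = 1 := by
      rw [hterm]
      have : ∀ f : ℕ → ℕ, (if f ∈ P ∅ then ∏ j ∈ (∅ : Finset ℕ), (c j * om b α (f j)) else 0) =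
          if f = 0 then 1 else 0 := by
        intro f
        have : f ∈ P ∅ ↔ f = 0 := by
          constructor
          · intro h; ext j; exact h.2.1 j (by simp)
          · rintro rfl
            refine ⟨by simp, by simp, ?_⟩
            have : trunc b n 0 = 0 := by simp [trunc, digit]
            simp [this]
        simp [this]
      simp_rw [this]
      exact tsum_ite_eq _ _
    rw [← Finset.sum_filter_add_sum_filter_not (Finset.range τ).powerset (fun u => u.Nonempty),
      add_comm]
    congr 1
    rw [Finset.sum_eq_single ∅]
    · exact h0.symm
    · intro u hu hne
      simp only [Finset.mem_filter, Finset.not_nonempty_iff_eq_empty] at hu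
      exact absurd hu.2 hne
    · intro h; simp at h
  rw [hBE, Finset.sum_congr rfl (fun u _ => hterm u), ← Summable.tsum_finsetSum
    (fun _ _ => ENNReal.summable), Cc]
  refine (tsum_subtype {f : ℕ → ℕ | ∀ j, τ ≤ j → f j = 0}
    (fun f => (∏ j ∈ Finset.range τ, wj b α (c j) (f j)) *
    (if Dset b m n p (∑ j ∈ Finset.range τ, trunc b n (f j) * q j) then 1 else 0))).trans ?_
  congr 1
  ext f
  rw [Set.indicator_apply]
  unfold wj
  rw [Finset.prod_add, Finset.sum_mul]
  split_ifs with hT hD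
  · apply Finset.sum_congr rfl
    intro u hu
    rw [mul_one]
    split_ifs with hf
    · rw [Finset.prod_congr rfl (fun j hj => if_pos (hf.1 j hj)),
        Finset.prod_eq_one (s := Finset.range τ \ u), mul_one]
      intro j hj
      rw [if_pos (hf.2.1 j (Finset.mem_sdiff.1 hj).2)]
    · by_contra hne
      apply hf
      have h1 := left_ne_zero_of_mul hne
      have h2 := right_ne_zero_of_mul hne
      rw [Finset.prod_ne_zero_iff] at h1 h2
      refine ⟨fun j hj => ?_, fun j hj => ?_, hD⟩
      · by_contra hh; exact h1 j hj (if_neg hh)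
      · by_cases hjt : j < τ
        · by_contra hh
          exact h2 j (Finset.mem_sdiff.2 ⟨Finset.mem_range.2 hjt, hj⟩) (if_neg hh)
        · exact hT j (by omega)
  · symm
    rw [Finset.sum_eq_zero]
    · simp
    · intro u _
      rw [if_neg (fun h => hD h.2.2)]
  · symm
    apply Finset.sum_eq_zero
    intro u hu
    rw [if_neg]
    intro h
    apply hT
    intro j hj
    apply h.2.1
    intro hju
    have := Finset.mem_range.1 (Finset.mem_powerset.1 hu hju)
    omega

lemma tsum_prod (F : ℕ → ℕ → ℝ≥0∞) (τ : ℕ) :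
    ∑' f : T τ, ∏ j ∈ Finset.range τ, F j (f.1 j) = ∏ j ∈ Finset.range τ, ∑' k, F j k := by
  induction τ with
  | zero =>
    have : Unique (T 0) := ⟨⟨⟨0, by simp⟩⟩, fun f => Subtype.ext (by ext j; exact f.2 j (by simp))⟩
    simp [tsum_fintype]
  | succ τ ih =>
    rw [← (Tequiv τ).symm.tsum_eq, ENNReal.tsum_prod', Finset.prod_range_succ, ← ih, mul_comm,
      ← ENNReal.tsum_mul_right]
    congr 1
    ext k
    rw [← ENNReal.tsum_mul_left]
    congr 1
    ext g
    rw [Finset.prod_range_succ, mul_comm]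
    simp only [Tequiv, Equiv.coe_fn_symm_mk, Function.update_self]
    congr 1
    apply Finset.prod_congr rfl
    intro j hj
    rw [Function.update_of_ne (by have := Finset.mem_range.1 hj; omega)]

end QMC
namespace QMC
open scoped ENNReal

lemma trunc_zero_of_dvd {b n k : ℕ} (hb : 2 ≤ b) (h : b ^ n ∣ k) : trunc b n k = 0 := by
  obtain ⟨l, rfl⟩ := h
  unfold trunc
  apply Finset.sum_eq_zero
  intro i hi
  have hi := Finset.mem_range.1 hi
  obtain ⟨d, rfl⟩ : ∃ d, n = i + (d + 1) := ⟨n - i - 1, by omega⟩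
  have : digit b (b ^ (i + (d + 1)) * l) i = 0 := by
    unfold digit
    rw [pow_add, mul_assoc, Nat.mul_div_cancel_left _ (by positivity), pow_succ', mul_assoc,
      Nat.mul_mod_right]
  rw [this]; simp

lemma dvd_of_digits {b : ℕ} (hb : 2 ≤ b) (n k : ℕ) (h : ∀ i < n, digit b k i = 0) : b ^ n ∣ k := by
  induction n with
  | zero => simp
  | succ n ih =>
    obtain ⟨l, rfl⟩ := ih (fun i hi => h i (by omega))
    have := h n (by omega)
    unfold digit at this
    rw [Nat.mul_div_cancel_left _ (by positivity)] at this
    rw [pow_succ]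
    exact Nat.mul_dvd_mul_left _ (Nat.dvd_of_mod_eq_zero this)

lemma trunc_coeff (b n k i : ℕ) (hi : i < n) : (trunc b n k).coeff i = (digit b k i : ZMod b) := by
  unfold trunc
  simp [Polynomial.finsetSum_coeff, Polynomial.coeff_X_pow, hi]

lemma trunc_degree (b n k : ℕ) : (trunc b n k).degree < (n : WithBot ℕ) := by
  unfold trunc
  rw [← Polynomial.mem_degreeLT]
  apply Submodule.sum_mem
  intro i hi
  rw [Polynomial.mem_degreeLT]
  refine lt_of_le_of_lt (Polynomial.degree_C_mul_X_pow_le _ _) ?_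
  exact_mod_cast Finset.mem_range.1 hi

lemma trunc_ne_zero {b n k : ℕ} (hb : 2 ≤ b) (h : ¬ b ^ n ∣ k) : trunc b n k ≠ 0 := by
  intro h0
  apply h
  apply dvd_of_digits hb
  intro i hi
  have := trunc_coeff b n k i hi
  rw [h0, Polynomial.coeff_zero, eq_comm, ZMod.natCast_eq_zero_iff] at this
  exact Nat.eq_zero_of_dvd_of_lt this (Nat.mod_lt _ (by omega))

/-- polynomial with given coefficient vector -/
noncomputable def pl (b n : ℕ) [Fact b.Prime] (v : Fin n → ZMod b) : Polynomial (ZMod b) :=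
  ((Polynomial.degreeLTEquiv (ZMod b) n).symm v : Polynomial (ZMod b))

lemma pl_degree (b n : ℕ) [Fact b.Prime] (v : Fin n → ZMod b) :
    (pl b n v).degree < (n : WithBot ℕ) :=
  Polynomial.mem_degreeLT.1 ((Polynomial.degreeLTEquiv (ZMod b) n).symm v).2

lemma pl_inj (b n : ℕ) [Fact b.Prime] : Function.Injective (pl b n) := by
  intro v w h
  exact (Polynomial.degreeLTEquiv (ZMod b) n).symm.injective (Subtype.ext h)

open Classical in
lemma count_le {b m n : ℕ} [Fact b.Prime] {p : Polynomial (ZMod b)} (hp : Irreducible p)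
    (hpdeg : p.degree = (n : WithBot ℕ)) (r t : Polynomial (ZMod b)) (ht : t ≠ 0)
    (htd : t.degree < (n : WithBot ℕ)) :
    (Finset.univ.filter (fun v : Fin n → ZMod b => Dset b m n p (r + t * pl b n v))).card
      ≤ b ^ (n - m) := by
  have hcard : Fintype.card (Fin (n - m) → ZMod b) = b ^ (n - m) := by
    simp [ZMod.card]
  rw [← hcard, ← Fintype.card_subtype]
  have hmem : ∀ v : {v : Fin n → ZMod b // Dset b m n p (r + t * pl b n v)},
      (r + t * pl b n v) % p ∈ Polynomial.degreeLT (ZMod b) (n - m) := by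
    intro v
    exact Polynomial.mem_degreeLT.2 v.2
  apply Fintype.card_le_of_injective
    (fun v => Polynomial.degreeLTEquiv (ZMod b) (n - m) ⟨_, hmem v⟩)
  intro v w h
  have h1 := (Polynomial.degreeLTEquiv (ZMod b) (n - m)).injective h
  have h2 : (r + t * pl b n v) % p = (r + t * pl b n w) % p := congrArg Subtype.val h1
  have e1 := EuclideanDomain.div_add_mod (r + t * pl b n v) p
  have e2 := EuclideanDomain.div_add_mod (r + t * pl b n w) p
  have h3 : p ∣ t * (pl b n v - pl b n w) := by
    refine ⟨(r + t * pl b n v) / p - (r + t * pl b n w) / p, ?_⟩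
    rw [h2] at e1
    linear_combination e2 - e1
  have h4 : pl b n v - pl b n w = 0 := by
    rcases hp.prime.dvd_or_dvd h3 with h | h
    · exfalso
      exact ht (Polynomial.eq_zero_of_dvd_of_degree_lt h (by rw [hpdeg]; exact htd))
    · apply Polynomial.eq_zero_of_dvd_of_degree_lt h
      rw [hpdeg]
      exact lt_of_le_of_lt (Polynomial.degree_sub_le _ _)
        (max_lt (pl_degree b n v) (pl_degree b n w))
  exact Subtype.ext (pl_inj b n (sub_eq_zero.1 h4))

open Classical in
/-- weights of indices with nonzero truncation -/
noncomputable def w2 (b α n : ℕ) (c : ℝ≥0∞) (k : ℕ) : ℝ≥0∞ :=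
  if k ∈ Eset b ∧ ¬ b ^ n ∣ k then c * om b α k else 0

open Classical in
/-- sum over indices divisible by `b ^ n` -/
noncomputable def s2 (b α n : ℕ) (c : ℝ≥0∞) : ℝ≥0∞ :=
  ∑' k, if k ∈ Eset b ∧ b ^ n ∣ k then c * om b α k else 0

open Classical in
/-- the part of the criterion that depends on the last generator -/
noncomputable def th (b α m n : ℕ) [Fact b.Prime] (c : ℕ → ℝ≥0∞) (p : Polynomial (ZMod b))
    (τ : ℕ) (q : ℕ → Polynomial (ZMod b)) (q' : Polynomial (ZMod b)) : ℝ≥0∞ :=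
  ∑' x : ℕ × T τ, w2 b α n (c τ) x.1 * (∏ j ∈ Finset.range τ, wj b α (c j) (x.2.1 j)) *
    (if Dset b m n p ((∑ j ∈ Finset.range τ, trunc b n (x.2.1 j) * q j) + trunc b n x.1 * q')
      then 1 else 0)

open Classical in
lemma Cc_succ {b α m n : ℕ} [Fact b.Prime] (hb : 2 ≤ b) (c : ℕ → ℝ≥0∞) (p : Polynomial (ZMod b))
    (τ : ℕ) (q : ℕ → Polynomial (ZMod b)) (q' : Polynomial (ZMod b)) :
    Cc b α m n c p (τ + 1) (Function.update q τ q') =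
      (1 + s2 b α n (c τ)) * Cc b α m n c p τ q + th b α m n c p τ q q' := by
  have hw : 1 + s2 b α n (c τ) = ∑' k, ((if k = 0 then 1 else 0) +
      if k ∈ Eset b ∧ b ^ n ∣ k then c τ * om b α k else 0) := by
    rw [ENNReal.tsum_add, tsum_ite_eq]; rfl
  rw [hw, ← ENNReal.tsum_mul_right, th, ENNReal.tsum_prod', ← ENNReal.tsum_add]
  rw [Cc, ← (Tequiv τ).symm.tsum_eq, ENNReal.tsum_prod']
  congr 1
  ext k
  rw [Cc, ← ENNReal.tsum_mul_left, ← ENNReal.tsum_add]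
  congr 1
  ext g
  have e1 : ((Tequiv τ).symm (k, g)).1 τ = k := by
    simp [Tequiv]
  have e2 : ∀ j ∈ Finset.range τ, ((Tequiv τ).symm (k, g)).1 j = g.1 j := by
    intro j hj
    simp only [Tequiv, Equiv.coe_fn_symm_mk]
    rw [Function.update_of_ne (by have := Finset.mem_range.1 hj; omega)]
  rw [Finset.prod_range_succ, Finset.sum_range_succ, e1, Function.update_self,
    Finset.prod_congr rfl (fun j hj => by rw [e2 j hj]),
    Finset.sum_congr rfl (g := fun j => trunc b n (g.1 j) * q j) (fun j hj => by
      rw [e2 j hj, Function.update_of_ne (by have := Finset.mem_range.1 hj; omega)])]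
  set W := ∏ j ∈ Finset.range τ, wj b α (c j) (g.1 j)
  set r := ∑ j ∈ Finset.range τ, trunc b n (g.1 j) * q j
  unfold wj w2
  by_cases hd : b ^ n ∣ k
  · rw [trunc_zero_of_dvd hb hd, zero_mul, add_zero]
    simp only [hd, not_true, and_false, and_true, if_false, zero_mul, add_zero]
    ring
  · have hk : k ≠ 0 := by rintro rfl; simp at hd
    simp only [hd, hk, not_false_eq_true, and_false, and_true, if_false, zero_mul, add_zero,
      zero_add]
    ring

lemma Cc_update {b α m n : ℕ} [Fact b.Prime] (c : ℕ → ℝ≥0∞) (p : Polynomial (ZMod b))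
    (τ : ℕ) (q : ℕ → Polynomial (ZMod b)) :
    Cc b α m n c p τ q ≤ ∏ j ∈ Finset.range τ, ∑' k, wj b α (c j) k := by
  rw [← tsum_prod, Cc]
  apply ENNReal.tsum_le_tsum
  intro f
  split_ifs <;> simp

open Classical in
lemma wj_rpow {b α : ℕ} (c : ℝ≥0∞) (k : ℕ) {lam : ℝ} (h0 : 0 < lam) :
    wj b α c k ^ lam = c ^ lam * (if k ∈ Eset b then om b α k ^ lam else 0) +
      (if k = 0 then 1 else 0) := by
  unfold wj
  by_cases hk : k = 0
  · have : k ∉ Eset b := fun h => h.1 hk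
    simp [hk, show (0 : ℕ) ∉ Eset b from fun h => h.1 rfl]
  · by_cases hE : k ∈ Eset b
    · simp [hk, hE, ENNReal.mul_rpow_of_nonneg _ _ h0.le]
    · simp [hk, hE, h0]

lemma wj_sum {b α : ℕ} (hb : 2 ≤ b) (hα : 2 ≤ α) {lam : ℝ} (hl : 1 / (α : ℝ) < lam)
    (c : ℝ≥0∞) :
    ∑' k, wj b α c k ^ lam ≤ 1 + c ^ lam * ENNReal.ofReal (A1 b α lam) := by
  have h0 := (rpow_facts hb hα hl).1
  simp_rw [wj_rpow c _ h0]
  rw [ENNReal.tsum_add, ENNReal.tsum_mul_left, tsum_ite_eq, add_comm]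
  gcongr
  exact Esum hb hα hl

lemma w2_sum {b α : ℕ} (n : ℕ) (hb : 2 ≤ b) (hα : 2 ≤ α) {lam : ℝ} (hl : 1 / (α : ℝ) < lam)
    (c : ℝ≥0∞) :
    ∑' k, w2 b α n c k ^ lam ≤ c ^ lam * ENNReal.ofReal (A1 b α lam) := by
  classical
  have h0 := (rpow_facts hb hα hl).1
  refine le_trans ?_ (mul_le_mul_right (Esum hb hα hl) _)
  rw [← ENNReal.tsum_mul_left]
  apply ENNReal.tsum_le_tsum
  intro k
  unfold w2
  by_cases hE : k ∈ Eset b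
  · by_cases hd : b ^ n ∣ k
    · simp [hd, h0]
    · simp [hE, hd, ENNReal.mul_rpow_of_nonneg _ _ h0.le]
  · simp [hE, h0]

lemma s2_le {b α m n : ℕ} (hb : 2 ≤ b) (hα : 2 ≤ α) (hn : 0 < n)
    (hnm : (α * m : ℝ) / 2 ≤ (n : ℝ)) {lam : ℝ} (hl : 1 / (α : ℝ) < lam) (hl1 : lam ≤ 1)
    (c : ℝ≥0∞) :
    s2 b α n c ^ lam ≤ c ^ lam * ENNReal.ofReal (((b : ℝ) ^ m)⁻¹ * A2 b α lam) := by
  classical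
  have h0 := (rpow_facts hb hα hl).1
  refine (tsum_rpow_le _ h0 hl1).trans ?_
  refine le_trans ?_ (mul_le_mul_right (Esum2 hb hα hn hnm hl) _)
  rw [← ENNReal.tsum_mul_left]
  apply ENNReal.tsum_le_tsum
  intro k
  split_ifs
  · rw [ENNReal.mul_rpow_of_nonneg _ _ h0.le]
  · simp [h0]

lemma exists_good {b α m n : ℕ} [Fact b.Prime] (hb : 2 ≤ b) (hα : 2 ≤ α) (hmn : m ≤ n)
    {p : Polynomial (ZMod b)} (hp : Irreducible p) (hpdeg : p.degree = (n : WithBot ℕ))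
    {lam : ℝ} (hl : 1 / (α : ℝ) < lam) (hl1 : lam ≤ 1)
    (c : ℕ → ℝ≥0∞) (τ : ℕ) (q : ℕ → Polynomial (ZMod b)) :
    ∃ q' : Polynomial (ZMod b), q'.degree < (n : WithBot ℕ) ∧
      th b α m n c p τ q q' ^ lam ≤ ((b : ℝ≥0∞) ^ m)⁻¹ *
        (c τ ^ lam * ENNReal.ofReal (A1 b α lam) *
          ∏ j ∈ Finset.range τ, (1 + c j ^ lam * ENNReal.ofReal (A1 b α lam))) := by
  classical
  have h0 := (rpow_facts hb hα hl).1
  obtain ⟨v0, hv0⟩ := Finite.exists_min (fun v : Fin n → ZMod b => th b α m n c p τ q (pl b n v))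
  refine ⟨pl b n v0, pl_degree b n v0, ?_⟩
  set Z := c τ ^ lam * ENNReal.ofReal (A1 b α lam) *
          ∏ j ∈ Finset.range τ, (1 + c j ^ lam * ENNReal.ofReal (A1 b α lam)) with hZ
  have hsum : ∑ v : Fin n → ZMod b, th b α m n c p τ q (pl b n v) ^ lam ≤
      (b : ℝ≥0∞) ^ (n - m) * Z := by
    calc _ ≤ ∑ v : Fin n → ZMod b, ∑' x : ℕ × T τ, w2 b α n (c τ) x.1 ^ lam *
          (∏ j ∈ Finset.range τ, wj b α (c j) (x.2.1 j) ^ lam) *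
          (if Dset b m n p ((∑ j ∈ Finset.range τ, trunc b n (x.2.1 j) * q j) +
            trunc b n x.1 * pl b n v) then 1 else 0) := by
          apply Finset.sum_le_sum
          intro v _
          refine (tsum_rpow_le _ h0 hl1).trans (le_of_eq ?_)
          congr 1
          ext x
          rw [ENNReal.mul_rpow_of_nonneg _ _ h0.le, ENNReal.mul_rpow_of_nonneg _ _ h0.le,
            ENNReal.prod_rpow_of_nonneg h0.le]
          congr 1
          split_ifs <;> simp [h0]
      _ = ∑' x : ℕ × T τ, ∑ v : Fin n → ZMod b, w2 b α n (c τ) x.1 ^ lam *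
          (∏ j ∈ Finset.range τ, wj b α (c j) (x.2.1 j) ^ lam) *
          (if Dset b m n p ((∑ j ∈ Finset.range τ, trunc b n (x.2.1 j) * q j) +
            trunc b n x.1 * pl b n v) then 1 else 0) := by
          rw [Summable.tsum_finsetSum (fun _ _ => ENNReal.summable)]
      _ ≤ ∑' x : ℕ × T τ, (b : ℝ≥0∞) ^ (n - m) * (w2 b α n (c τ) x.1 ^ lam *
          (∏ j ∈ Finset.range τ, wj b α (c j) (x.2.1 j) ^ lam)) := by
          apply ENNReal.tsum_le_tsum
          intro x
          rw [← Finset.mul_sum, mul_comm]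
          by_cases hd : b ^ n ∣ x.1
          · simp [w2, hd, h0]
          · gcongr
            rw [Finset.sum_boole]
            exact_mod_cast count_le hp hpdeg _ _ (trunc_ne_zero hb hd) (trunc_degree b n x.1)
      _ = (b : ℝ≥0∞) ^ (n - m) * ((∑' k, w2 b α n (c τ) k ^ lam) *
            ∏ j ∈ Finset.range τ, ∑' k, wj b α (c j) k ^ lam) := by
          rw [ENNReal.tsum_mul_left, ENNReal.tsum_prod', ← ENNReal.tsum_mul_right]
          congr 2
          ext k
          dsimp only
          rw [ENNReal.tsum_mul_left, tsum_prod (fun j k => wj b α (c j) k ^ lam)]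
      _ ≤ _ := by
          rw [hZ]
          gcongr with j hj
          · exact w2_sum n hb hα hl _
          · exact wj_sum hb hα hl _
  have hlow : (b : ℝ≥0∞) ^ n * th b α m n c p τ q (pl b n v0) ^ lam ≤
      ∑ v : Fin n → ZMod b, th b α m n c p τ q (pl b n v) ^ lam := by
    have hc : (b : ℝ≥0∞) ^ n * th b α m n c p τ q (pl b n v0) ^ lam =
        ∑ v : Fin n → ZMod b, th b α m n c p τ q (pl b n v0) ^ lam := by
      simp [ZMod.card]
    rw [hc]
    apply Finset.sum_le_sum
    intro v _
    exact ENNReal.rpow_le_rpow (hv0 v) h0.le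
  have hb0 : (b : ℝ≥0∞) ≠ 0 := by
    have : b ≠ 0 := by omega
    exact_mod_cast this
  have hbt : (b : ℝ≥0∞) ≠ ⊤ := ENNReal.natCast_ne_top b
  have h := hlow.trans hsum
  have e : (b : ℝ≥0∞) ^ n = (b : ℝ≥0∞) ^ (n - m) * (b : ℝ≥0∞) ^ m := by
    rw [← pow_add]; congr 1; omega
  rw [e, mul_assoc, ENNReal.mul_le_mul_iff_right (pow_ne_zero _ hb0) (ENNReal.pow_ne_top hbt)] at h
  rw [← ENNReal.div_eq_inv_mul, ENNReal.le_div_iff_mul_le (Or.inl (pow_ne_zero _ hb0))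
    (Or.inl (ENNReal.pow_ne_top hbt)), mul_comm]
  exact h

end QMC
namespace QMC

/-- When `n ≥ αm/2`, the component-by-component construction of folded higher order
polynomial lattice rules achieves, for every `1/α < λ ≤ 1`, the optimal-order bound
`B_α(q, p) ≤ b^{-m/λ} [-1 + ∏_{j=1}^s (1 + γ_j^{λ/2} D^{λ/2} A_{α,b,λ})]^{1/λ}`. -/
theorem cbc_bound_optimal (b α m n s : ℕ) [Fact b.Prime] (hα : 2 ≤ α) (hm : 0 < m)
    (hn : 0 < n) (hnm : (α * m : ℝ) / 2 ≤ (n : ℝ))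
    (hs : 0 < s) (p : Polynomial (ZMod b)) (hp : Irreducible p)
    (hpdeg : p.degree = (n : WithBot ℕ))
    (γ : ℕ → ℝ) (hγ : ∀ j, 0 ≤ γ j) (D : ℝ) (hD : 0 < D)
    (q : ℕ → Polynomial (ZMod b))
    (hq : ∀ τ, 1 ≤ τ → τ ≤ s → (q (τ - 1)).degree < (n : WithBot ℕ) ∧
      ∀ q' : Polynomial (ZMod b), q'.degree < (n : WithBot ℕ) →
        Bcrit b α m n γ D p τ q ≤ Bcrit b α m n γ D p τ (Function.update q (τ - 1) q')) :
    ∀ lam : ℝ, 1 / (α : ℝ) < lam → lam ≤ 1 →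
      Bcrit b α m n γ D p s q ≤
        (b : ℝ) ^ (-((m : ℝ) / lam)) *
          (-1 + ∏ j ∈ Finset.range s,
            (1 + γ j ^ (lam / 2) * D ^ (lam / 2) * (A1 b α lam + A2 b α lam))) ^ (1 / lam) := by
  intro lam hl hl1
  have hb : 2 ≤ b := (Fact.out : b.Prime).two_le
  have hb' : (2 : ℝ) ≤ b := by exact_mod_cast hb
  have hα' : (2 : ℝ) ≤ α := by exact_mod_cast hα
  have h0 := (rpow_facts hb hα hl).1
  have hmn : m ≤ n := by
    have h1 : (m : ℝ) ≤ n := by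
      have : (0 : ℝ) ≤ m := Nat.cast_nonneg m
      nlinarith
    exact_mod_cast h1
  set c : ℕ → ENNReal := fun j => ENNReal.ofReal (Real.sqrt (γ j) * Real.sqrt D) with hc
  set g : ℕ → ℝ := fun j => γ j ^ (lam / 2) * D ^ (lam / 2) with hg
  have hg0 : ∀ j, 0 ≤ g j := fun j =>
    mul_nonneg (Real.rpow_nonneg (hγ j) _) (Real.rpow_nonneg hD.le _)
  have hcl : ∀ j, c j ^ lam = ENNReal.ofReal (g j) := by
    intro j
    simp only [hc, hg]
    rw [ENNReal.ofReal_rpow_of_nonneg (by positivity) h0.le,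
      Real.mul_rpow (Real.sqrt_nonneg _) (Real.sqrt_nonneg _), Real.sqrt_eq_rpow, Real.sqrt_eq_rpow,
      ← Real.rpow_mul (hγ j), ← Real.rpow_mul hD.le]
    congr 3 <;> ring
  have hA1 := A1_nonneg hb hα hl
  have hA2 := A2_nonneg hb hα hl
  set a1 := A1 b α lam with ha1
  set a2 := A2 b α lam with ha2
  set P : ℕ → ℝ := fun τ => ∏ j ∈ Finset.range τ, (1 + g j * (a1 + a2)) with hP
  have hP1 : ∀ τ, 1 ≤ P τ := by
    intro τ
    simp only [hP]
    induction τ with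
    | zero => simp
    | succ τ ih =>
      rw [Finset.prod_range_succ]
      have := mul_nonneg (hg0 τ) (add_nonneg hA1 hA2)
      nlinarith
  -- finiteness
  have hl' : 1 / (α : ℝ) < 1 := by
    rw [div_lt_one (by linarith)]; linarith
  have hfin : ∀ τ q, BE b α m n c p τ q ≠ ⊤ := by
    intro τ q
    have h1 : Cc b α m n c p τ q ≠ ⊤ := by
      refine ne_top_of_le_ne_top ?_ (Cc_update c p τ q)
      apply ENNReal.prod_ne_top
      intro j _
      have := wj_sum hb hα hl' (c j)
      simp only [ENNReal.rpow_one] at this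
      refine ne_top_of_le_ne_top ?_ this
      exact ENNReal.add_ne_top.2 ⟨ENNReal.one_ne_top,
        ENNReal.mul_ne_top ENNReal.ofReal_ne_top ENNReal.ofReal_ne_top⟩
    rw [Cc_eq] at h1
    exact (ENNReal.add_ne_top.1 h1).2
  set B : ℝ := ((b : ℝ) ^ m)⁻¹ with hB
  have hB0 : 0 < B := by positivity
  have hB1 : B ≤ 1 := inv_le_one_of_one_le₀ (one_le_pow₀ (by linarith))
  have hBE : ((b : ENNReal) ^ m)⁻¹ = ENNReal.ofReal B := by
    rw [hB, ENNReal.ofReal_inv_of_pos (by positivity), ENNReal.ofReal_pow (by positivity),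
      ENNReal.ofReal_natCast]
  have main : ∀ τ, τ ≤ s → BE b α m n c p τ q ^ lam ≤ ENNReal.ofReal (B * (P τ - 1)) := by
    intro τ
    induction τ with
    | zero =>
      intro _
      have : BE b α m n c p 0 q = 0 := by
        unfold BE
        apply Finset.sum_eq_zero
        intro u hu
        simp only [Finset.range_zero, Finset.powerset_empty, Finset.mem_filter,
          Finset.mem_singleton] at hu
        exact absurd hu.1 hu.2.ne_empty
      rw [this, ENNReal.zero_rpow_of_pos h0]
      exact zero_le
    | succ τ ih =>
      intro hτ
      have ih := ih (by omega)
      obtain ⟨q', hq'd, hq'⟩ := exists_good hb hα hmn hp hpdeg hl hl1 c τ q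
      have hopt := (hq (τ + 1) (by omega) hτ).2 q' hq'd
      rw [Nat.add_sub_cancel, Bcrit_eq b α m n γ hγ D p _ _ (hfin _ _),
        Bcrit_eq b α m n γ hγ D p _ _ (hfin _ _),
        ENNReal.toReal_le_toReal (hfin _ _) (hfin _ _)] at hopt
      have hC := Cc_succ (α := α) (m := m) (n := n) hb c p τ q q'
      rw [Cc_eq, Cc_eq] at hC
      have hstep : BE b α m n c p (τ + 1) q ≤ BE b α m n c p τ q +
          s2 b α n (c τ) * (1 + BE b α m n c p τ q) + th b α m n c p τ q q' := by
        refine hopt.trans ?_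
        rw [← ENNReal.add_le_add_iff_left ENNReal.one_ne_top, hC]
        apply le_of_eq; ring
      have hs2 := s2_le (m := m) hb hα hn hnm hl hl1 (c τ)
      rw [hBE, hcl] at hq'
      rw [hcl] at hs2
      have hprod : ∏ j ∈ Finset.range τ, (1 + c j ^ lam * ENNReal.ofReal a1) ≤
          ENNReal.ofReal (P τ) := by
        simp only [hP]
        rw [ENNReal.ofReal_prod_of_nonneg (fun j _ => by
          have := mul_nonneg (hg0 j) (add_nonneg hA1 hA2); linarith)]
        apply Finset.prod_le_prod'
        intro j _
        rw [hcl, ← ENNReal.ofReal_mul (hg0 j), ← ENNReal.ofReal_one,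
          ← ENNReal.ofReal_add zero_le_one (mul_nonneg (hg0 j) hA1)]
        apply ENNReal.ofReal_le_ofReal
        have := mul_nonneg (hg0 j) hA2
        linarith
      have hPt := hP1 τ
      have hBP : 0 ≤ B * (P τ - 1) := mul_nonneg hB0.le (by linarith)
      have hth : th b α m n c p τ q q' ^ lam ≤ ENNReal.ofReal (B * (g τ * a1 * P τ)) := by
        refine hq'.trans ?_
        rw [ENNReal.ofReal_mul hB0.le, ENNReal.ofReal_mul (mul_nonneg (hg0 τ) hA1),
          ENNReal.ofReal_mul (hg0 τ)]
        gcongr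
      calc BE b α m n c p (τ + 1) q ^ lam ≤ (BE b α m n c p τ q +
          s2 b α n (c τ) * (1 + BE b α m n c p τ q) + th b α m n c p τ q q') ^ lam :=
            ENNReal.rpow_le_rpow hstep h0.le
        _ ≤ BE b α m n c p τ q ^ lam + s2 b α n (c τ) ^ lam * (1 + BE b α m n c p τ q ^ lam) +
            th b α m n c p τ q q' ^ lam := by
            refine (ENNReal.rpow_add_le_add_rpow _ _ h0.le hl1).trans ?_
            gcongr
            refine (ENNReal.rpow_add_le_add_rpow _ _ h0.le hl1).trans ?_
            gcongr
            rw [ENNReal.mul_rpow_of_nonneg _ _ h0.le]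
            gcongr
            refine (ENNReal.rpow_add_le_add_rpow _ _ h0.le hl1).trans ?_
            rw [ENNReal.one_rpow]
        _ ≤ ENNReal.ofReal (B * (P τ - 1)) + ENNReal.ofReal (g τ) * ENNReal.ofReal (B * a2) *
            (1 + ENNReal.ofReal (B * (P τ - 1))) + ENNReal.ofReal (B * (g τ * a1 * P τ)) := by
            gcongr
        _ = ENNReal.ofReal (B * (P τ - 1) + g τ * (B * a2) * (1 + B * (P τ - 1)) +
              B * (g τ * a1 * P τ)) := by
            have hn1 : 0 ≤ g τ * (B * a2) := mul_nonneg (hg0 τ) (mul_nonneg hB0.le hA2)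
            have hn2 : 0 ≤ g τ * (B * a2) * (1 + B * (P τ - 1)) := mul_nonneg hn1 (by linarith)
            have hn3 : 0 ≤ B * (g τ * a1 * P τ) :=
              mul_nonneg hB0.le (mul_nonneg (mul_nonneg (hg0 τ) hA1) (by linarith))
            rw [ENNReal.ofReal_add (add_nonneg hBP hn2) hn3, ENNReal.ofReal_add hBP hn2,
              ENNReal.ofReal_mul hn1, ENNReal.ofReal_mul (hg0 τ),
              ENNReal.ofReal_add zero_le_one hBP, ENNReal.ofReal_one]
        _ ≤ _ := by
            apply ENNReal.ofReal_le_ofReal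
            have hPs : P (τ + 1) = P τ * (1 + g τ * (a1 + a2)) := by
              simp only [hP]; rw [Finset.prod_range_succ]
            rw [hPs]
            have hn1 : 0 ≤ g τ * (B * a2) := mul_nonneg (hg0 τ) (mul_nonneg hB0.le hA2)
            have hn4 : B * (P τ - 1) ≤ P τ - 1 := mul_le_of_le_one_left (by linarith) hB1
            have := mul_le_mul_of_nonneg_left hn4 hn1
            nlinarith
  have hfinal := main s le_rfl
  rw [Bcrit_eq b α m n γ hγ D p _ _ (hfin _ _)]
  have hPs := hP1 s
  have hBP : 0 ≤ B * (P s - 1) := mul_nonneg hB0.le (by linarith)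
  have h2 : BE b α m n c p s q ≤ ENNReal.ofReal ((B * (P s - 1)) ^ (1 / lam)) := by
    rw [← ENNReal.ofReal_rpow_of_nonneg hBP (by positivity), one_div, ENNReal.le_rpow_inv_iff h0]
    exact hfinal
  have h3 := ENNReal.toReal_le_of_le_ofReal (Real.rpow_nonneg hBP _) h2
  refine h3.trans (le_of_eq ?_)
  rw [Real.mul_rpow hB0.le (by linarith)]
  congr 1
  · rw [hB, ← Real.rpow_natCast, ← Real.rpow_neg (by linarith), ← Real.rpow_mul (by linarith)]
    congr 1
    ring
  · congr 1
    ring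

end QMC
end
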